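/- arXiv:1610.05740 — 2 statements merged into one kernel-verified Lean document; each statement's English description precedes it below -/
import Mathlib

section
/- Fix an integer d ≥ 1. A function F : ℝ → ℝ maps M([−1,1]^d) into itself when applied entrywise — that is, for every admissible measure μ on ℝ^d supported in [−1,1]^d there exists an admissible measure σ supported in [−1,1]^d with F(s_α(μ)) = s_α(σ) for every multi-index α ∈ ℕ₀^d — if and only if F is (the restriction of) an absolutely monotonic entire function. -/
open MeasureTheory

/-- An admissible measure on `ℝ^d`: a non-negative Borel measure all of whose absolute
moments are finite. -/
def IsAdmissibleD {d : ℕ} (μ : Measure (Fin d → ℝ)) : Prop :=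
  ∀ α : Fin d → ℕ, Integrable (fun x => ∏ i, x i ^ α i) μ

/-- The moment of a measure on `ℝ^d` corresponding to the multi-index `α`. -/
noncomputable def momentD {d : ℕ} (μ : Measure (Fin d → ℝ)) (α : Fin d → ℕ) : ℝ :=
  ∫ x, ∏ i, x i ^ α i ∂μ

/-- An absolutely monotonic entire function: a power series with non-negative
coefficients converging at every real point. -/
def AbsolutelyMonotonicEntire (G : ℝ → ℝ) : Prop :=
  ∃ c : ℕ → ℝ, (∀ n, 0 ≤ c n) ∧ ∀ x : ℝ, HasSum (fun n => c n * x ^ n) (G x)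

open Filter Topology Polynomial

theorem mt_pow {M : Type*} [Monoid M] [MeasurableSpace M] [MeasurableMul₂ M]
    (K : Submonoid M) (hK : MeasurableSet (K : Set M)) (μ : Measure M) [IsFiniteMeasure μ]
    (hμ : ∀ᵐ x ∂μ, x ∈ K) (n : ℕ) :
    ∃ ν : Measure M, IsFiniteMeasure ν ∧ (∀ᵐ x ∂ν, x ∈ K) ∧
      ∀ χ : M →* ℝ, Measurable χ → ∫ x, χ x ∂ν = (∫ x, χ x ∂μ) ^ n := by
  induction n with
  | zero =>
    refine ⟨Measure.dirac 1, inferInstance, ?_, ?_⟩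
    · exact (ae_dirac_iff (p := fun x => x ∈ K) hK).2 K.one_mem
    · intro χ hχ
      rw [integral_dirac' _ _ hχ.stronglyMeasurable]; simp
  | succ n ih =>
    obtain ⟨ν, h1, h2, h3⟩ := ih
    have hm : Measurable (fun p : M × M => p.1 * p.2) := measurable_mul
    refine ⟨(ν.prod μ).map (fun p => p.1 * p.2), inferInstance, ?_, ?_⟩
    · refine (ae_map_iff (p := fun x => x ∈ K) hm.aemeasurable hK).2 ?_
      have e1 : ∀ᵐ p ∂(ν.prod μ), p.1 ∈ K := Measure.quasiMeasurePreserving_fst.ae h2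
      have e2 : ∀ᵐ p ∂(ν.prod μ), p.2 ∈ K := Measure.quasiMeasurePreserving_snd.ae hμ
      filter_upwards [e1, e2] with p hp hq using K.mul_mem hp hq
    · intro χ hχ
      rw [integral_map hm.aemeasurable hχ.aestronglyMeasurable]
      simp only [map_mul]
      rw [integral_prod_mul (fun x => χ x) (fun x => χ x), h3 χ hχ, pow_succ]

theorem mt_conv {M : Type*} [Monoid M] [MeasurableSpace M] [MeasurableMul₂ M]
    (K : Submonoid M) (hK : MeasurableSet (K : Set M)) (μ : Measure M) [IsFiniteMeasure μ]
    (hμ : ∀ᵐ x ∂μ, x ∈ K) (c : ℕ → ℝ) (hc : ∀ n, 0 ≤ c n)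
    (hs : ∀ x : ℝ, Summable fun n => c n * x ^ n) :
    ∃ σ : Measure M, IsFiniteMeasure σ ∧ (∀ᵐ x ∂σ, x ∈ K) ∧
      ∀ χ : M →* ℝ, Measurable χ → (∀ x ∈ K, |χ x| ≤ 1) →
        HasSum (fun n => c n * (∫ x, χ x ∂μ) ^ n) (∫ x, χ x ∂σ) := by
  choose ν h1 h2 h3 using mt_pow K hK μ hμ
  have hmass : ∀ n, ν n Set.univ = ENNReal.ofReal ((μ.real Set.univ) ^ n) := by
    intro n
    have := h3 n 1 measurable_const
    simp at this
    rw [← this]; simp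
  have hfin : IsFiniteMeasure (Measure.sum fun n => ENNReal.ofReal (c n) • ν n) := by
    constructor
    rw [Measure.sum_apply _ MeasurableSet.univ]
    simp only [Measure.smul_apply, hmass, smul_eq_mul]
    simp_rw [← ENNReal.ofReal_mul (hc _)]
    rw [← ENNReal.ofReal_tsum_of_nonneg _ (hs _)]
    · exact ENNReal.ofReal_lt_top
    · intro n; have := hc n; positivity
  have hae : ∀ᵐ x ∂(Measure.sum fun n => ENNReal.ofReal (c n) • ν n), x ∈ K := by
    rw [Measure.ae_sum_iff]
    intro n
    exact Measure.ae_smul_measure (h2 n) _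
  refine ⟨_, hfin, hae, ?_⟩
  intro χ hχ hb
  have hi : Integrable (fun x => χ x) (Measure.sum fun n => ENNReal.ofReal (c n) • ν n) := by
    refine Integrable.of_bound hχ.aestronglyMeasurable 1 ?_
    filter_upwards [hae] with x hx using hb x hx
  have := hasSum_integral_measure hi
  simp only [integral_smul_measure, ENNReal.toReal_ofReal (hc _), smul_eq_mul, h3 _ χ hχ] at this
  exact this

/-- one-dimensional property -/
def MTP (F : ℝ → ℝ) : Prop :=
  ∀ μ : Measure ℝ, IsFiniteMeasure μ → (∀ᵐ x ∂μ, x ∈ Set.Icc (-1:ℝ) 1) →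
    ∃ σ : Measure ℝ, IsFiniteMeasure σ ∧ (∀ᵐ x ∂σ, x ∈ Set.Icc (-1:ℝ) 1) ∧
      ∀ k : ℕ, F (∫ x, x ^ k ∂μ) = ∫ x, x ^ k ∂σ

theorem mt_int {σ : Measure ℝ} [IsFiniteMeasure σ] (h : ∀ᵐ x ∂σ, x ∈ Set.Icc (-1:ℝ) 1)
    {f : ℝ → ℝ} (hf : Continuous f) : Integrable f σ := by
  obtain ⟨C, hC⟩ := isCompact_Icc.exists_bound_of_continuousOn (s := Set.Icc (-1:ℝ) 1) hf.continuousOn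
  refine Integrable.of_bound hf.aestronglyMeasurable C ?_
  filter_upwards [h] with x hx using hC x hx

noncomputable def twoM (a b u : ℝ) : Measure ℝ :=
  ENNReal.ofReal a • Measure.dirac 1 + ENNReal.ofReal b • Measure.dirac u

theorem twoM_fin (a b u : ℝ) : IsFiniteMeasure (twoM a b u) := by
  unfold twoM
  have := Measure.smul_finite (Measure.dirac (1:ℝ)) (ENNReal.ofReal_ne_top (r := a))
  have := Measure.smul_finite (Measure.dirac u) (ENNReal.ofReal_ne_top (r := b))
  infer_instance

theorem twoM_ae (a b u : ℝ) (hu : u ∈ Set.Icc (-1:ℝ) 1) :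
    ∀ᵐ x ∂(twoM a b u), x ∈ Set.Icc (-1:ℝ) 1 := by
  unfold twoM
  rw [ae_add_measure_iff]
  constructor
  · apply Measure.ae_smul_measure; exact (ae_dirac_iff (p := fun x => x ∈ Set.Icc (-1:ℝ) 1) measurableSet_Icc).2 (by norm_num)
  · apply Measure.ae_smul_measure; exact (ae_dirac_iff (p := fun x => x ∈ Set.Icc (-1:ℝ) 1) measurableSet_Icc).2 hu

theorem twoM_mom (a b u : ℝ) (ha : 0 ≤ a) (hb : 0 ≤ b) (k : ℕ) :
    ∫ x, x ^ k ∂(twoM a b u) = a + b * u ^ k := by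
  unfold twoM
  rw [integral_add_measure]
  · simp [integral_smul_measure, ENNReal.toReal_ofReal, ha, hb]
  · exact (integrable_dirac (by simp)).smul_measure (by simp)
  · exact (integrable_dirac (by simp)).smul_measure (by simp)

theorem mt_poly {σ : Measure ℝ} [IsFiniteMeasure σ] (h : ∀ᵐ x ∂σ, x ∈ Set.Icc (-1:ℝ) 1)
    (p : ℝ[X]) : ∫ x, p.eval x ∂σ = p.sum fun k c => c * ∫ x, x ^ k ∂σ := by
  simp only [Polynomial.eval_eq_sum, Polynomial.sum]
  rw [integral_finsetSum]
  · simp only [integral_const_mul]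
  · intro i _; exact mt_int h (by fun_prop)

theorem mt_pos {F : ℝ → ℝ} (hF : MTP F) (p : ℝ[X]) (hp : ∀ t ∈ Set.Icc (-1:ℝ) 1, 0 ≤ p.eval t)
    {a b u : ℝ} (ha : 0 ≤ a) (hb : 0 ≤ b) (hu : u ∈ Set.Icc (-1:ℝ) 1) :
    0 ≤ p.sum fun k c => c * F (a + b * u ^ k) := by
  obtain ⟨σ, h1, h2, h3⟩ := hF (twoM a b u) (twoM_fin _ _ _) (twoM_ae _ _ _ hu)
  simp only [twoM_mom a b u ha hb] at h3
  simp only [h3]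
  rw [← mt_poly h2]
  apply integral_nonneg_of_ae
  filter_upwards [h2] with x hx using hp x hx

/-- tail lemma -/
theorem mt_tail {σ τ : Measure ℝ} [IsFiniteMeasure σ] [IsFiniteMeasure τ]
    (h : ∀ᵐ x ∂σ, x ∈ Set.Icc (-1:ℝ) 1) (h' : ∀ᵐ x ∂τ, x ∈ Set.Icc (-1:ℝ) 1) (K : ℕ)
    (hk : ∀ k ≥ K, ∫ x, x ^ k ∂σ = ∫ x, x ^ k ∂τ) : ∫ x, x ∂σ = ∫ x, x ∂τ := by
  have key : ∀ N : ℕ, ∫ x, x * (1 - (1 - x ^ 2) ^ N) ^ K ∂σ = ∫ x, x * (1 - (1 - x ^ 2) ^ N) ^ K ∂τ := by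
    intro N
    have hd : (X ^ K : ℝ[X]) ∣ X * (1 - (1 - X ^ 2) ^ N) ^ K := by
      apply Dvd.dvd.mul_left
      apply pow_dvd_pow_of_dvd
      have : (1 - (1 - X ^ 2) : ℝ[X]) ∣ 1 ^ N - (1 - X ^ 2) ^ N := sub_dvd_pow_sub_pow _ _ _
      rw [one_pow, sub_sub_cancel] at this
      exact (Dvd.intro_left X (by ring)).trans this
    obtain ⟨q, hq⟩ := hd
    have e : ∀ x : ℝ, x * (1 - (1 - x ^ 2) ^ N) ^ K = (q.sum fun k c => c * x ^ (K + k)) := by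
      intro x
      have := congrArg (Polynomial.eval x) hq
      simp at this
      rw [this, Polynomial.eval_eq_sum, Polynomial.sum, Polynomial.sum, Finset.mul_sum]
      apply Finset.sum_congr rfl; intros; ring
    simp only [e, Polynomial.sum]
    rw [integral_finsetSum, integral_finsetSum]
    · simp only [integral_const_mul]
      apply Finset.sum_congr rfl; intro i _; rw [hk _ (by omega)]
    · intro i _; exact mt_int h' (by fun_prop)
    · intro i _; exact mt_int h (by fun_prop)
  have lim : ∀ ρ : Measure ℝ, IsFiniteMeasure ρ → (∀ᵐ x ∂ρ, x ∈ Set.Icc (-1:ℝ) 1) →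
      Tendsto (fun N : ℕ => ∫ x, x * (1 - (1 - x ^ 2) ^ N) ^ K ∂ρ) atTop (𝓝 (∫ x, x ∂ρ)) := by
    intro ρ _ hρ
    apply tendsto_integral_of_dominated_convergence (fun _ => 1)
    · intro n; exact Continuous.aestronglyMeasurable (by fun_prop)
    · exact integrable_const _
    · intro n
      filter_upwards [hρ] with x hx
      have h0 : 0 ≤ 1 - x ^ 2 := by nlinarith [hx.1, hx.2]
      have h1 : (1 - x ^ 2) ^ n ≤ 1 := pow_le_one₀ h0 (by nlinarith)
      have h2 : 0 ≤ (1 - x ^ 2) ^ n := by positivity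
      have h3 : (1 - (1 - x ^ 2) ^ n) ^ K ≤ 1 := pow_le_one₀ (by linarith) (by linarith)
      have h4 : 0 ≤ (1 - (1 - x ^ 2) ^ n) ^ K := pow_nonneg (by linarith) _
      rw [Real.norm_eq_abs, abs_mul, abs_of_nonneg h4]
      exact mul_le_one₀ (abs_le.2 hx) h4 h3
    · filter_upwards [hρ] with x hx
      by_cases h0 : x = 0
      · simp [h0]
      · have : Tendsto (fun n : ℕ => (1 - x ^ 2) ^ n) atTop (𝓝 0) := by
          apply tendsto_pow_atTop_nhds_zero_of_lt_one
          · nlinarith [hx.1, hx.2]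
          · have : 0 < x ^ 2 := by positivity
            linarith
        have := ((this.const_sub 1).pow K).const_mul x
        simpa using this
  exact tendsto_nhds_unique (lim σ inferInstance h) (by simp only [key]; exact lim τ inferInstance h')

noncomputable def hp (n : ℕ) : ℝ[X] := ∏ m ∈ Finset.range n, (X - C ((1/2 : ℝ) ^ m)) ^ 2

theorem hp_nonneg (n : ℕ) (t : ℝ) : 0 ≤ (hp n).eval t := by
  unfold hp
  rw [eval_prod]
  apply Finset.prod_nonneg; intro i _; simp; positivity

theorem hp_zero (n m : ℕ) (h : m < n) : (hp n).eval ((1/2 : ℝ) ^ m) = 0 := by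
  unfold hp
  rw [eval_prod]
  apply Finset.prod_eq_zero (Finset.mem_range.2 h); simp

theorem hp_pos (n : ℕ) : 0 < (hp n).eval ((1/2 : ℝ) ^ n) := by
  unfold hp
  rw [eval_prod]
  apply Finset.prod_pos; intro i hi
  have : (1/2 : ℝ) ^ n ≠ (1/2) ^ i := by
    intro h
    have := (pow_right_injective₀ (a := (1/2:ℝ)) (by norm_num) (by norm_num)) h
    simp at hi; omega
  have := sub_ne_zero.2 this
  simp only [eval_pow, eval_sub, eval_X, eval_C]
  positivity

theorem mt_horn (n : ℕ) (H : ℝ → ℝ) (hH : ContDiff ℝ n H) (x : ℝ)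
    (hpos : ∀ ε > 0, 0 ≤ (hp n).sum fun k c => c * H (x + ε * (1/2) ^ k)) :
    0 ≤ iteratedDeriv n H x := by
  have ht := taylor_isLittleO_univ (x₀ := x) hH
  set R : ℝ → ℝ := fun y => H y - taylorWithinEval H n Set.univ x y with hR
  have hr : ∀ k : ℕ, Tendsto (fun ε : ℝ => R (x + ε * (1/2) ^ k) / ε ^ n) (𝓝[>] 0) (𝓝 0) := by
    intro k
    have h1 : Tendsto (fun ε : ℝ => x + ε * (1/2) ^ k) (𝓝[>] 0) (𝓝 x) := by
      have : Continuous (fun ε : ℝ => x + ε * (1/2) ^ k) := by fun_prop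
      have := this.tendsto 0
      simp only [zero_mul, add_zero] at this
      exact this.mono_left nhdsWithin_le_nhds
    have h2 := ht.comp_tendsto h1
    have h3 : (fun ε : ℝ => R (x + ε * (1/2) ^ k)) =o[𝓝[>] 0] fun ε : ℝ => ε ^ n := by
      refine h2.trans_isBigO ?_
      refine Asymptotics.IsBigO.of_bound (((1/2:ℝ) ^ k) ^ n) (Eventually.of_forall fun ε => ?_)
      simp [mul_pow, mul_comm]
    exact h3.tendsto_div_nhds_zero
  have hT : ∀ y, taylorWithinEval H n Set.univ x (x + y) =
      ∑ m ∈ Finset.range (n + 1), (iteratedDeriv m H x / m.factorial) * y ^ m := by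
    intro y
    rw [taylor_within_apply]
    apply Finset.sum_congr rfl; intro m _
    rw [iteratedDerivWithin_univ]
    simp [div_eq_mul_inv]; ring
  have hsum : ∀ ε : ℝ, ((hp n).sum fun k c => c * taylorWithinEval H n Set.univ x (x + ε * (1/2) ^ k)) =
      (iteratedDeriv n H x / n.factorial) * ε ^ n * (hp n).eval ((1/2) ^ n) := by
    intro ε
    simp only [hT, Polynomial.sum, Finset.mul_sum]
    rw [Finset.sum_comm]
    have : ∀ m, ∑ k ∈ (hp n).support, (hp n).coeff k *
        (iteratedDeriv m H x / m.factorial * (ε * (1/2) ^ k) ^ m) =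
        (iteratedDeriv m H x / m.factorial) * ε ^ m * (hp n).eval ((1/2) ^ m) := by
      intro m
      rw [eval_eq_sum, Polynomial.sum, Finset.mul_sum]
      apply Finset.sum_congr rfl; intro k _
      rw [mul_pow, ← pow_mul, ← pow_mul, mul_comm k m]; ring
    simp only [this]
    rw [Finset.sum_range_succ, Finset.sum_eq_zero, zero_add]
    intro m hm
    rw [hp_zero n m (Finset.mem_range.1 hm), mul_zero]
  have hlim : Tendsto (fun ε : ℝ => (iteratedDeriv n H x / n.factorial) * (hp n).eval ((1/2) ^ n) +
      (hp n).sum fun k c => c * (R (x + ε * (1/2) ^ k) / ε ^ n)) (𝓝[>] 0)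
      (𝓝 ((iteratedDeriv n H x / n.factorial) * (hp n).eval ((1/2) ^ n) + 
        ∑ k ∈ (hp n).support, (hp n).coeff k * 0)) := by
    apply Tendsto.const_add
    simp only [Polynomial.sum]
    apply tendsto_finsetSum
    intro k _
    exact (hr k).const_mul _
  have h0 := ge_of_tendsto (b := 0) hlim (by
    filter_upwards [self_mem_nhdsWithin] with ε hε
    have hε : 0 < ε := hε
    have h1 := hpos ε hε
    have h2 : ((hp n).sum fun k c => c * H (x + ε * (1/2) ^ k)) = 
      ((hp n).sum fun k c => c * taylorWithinEval H n Set.univ x (x + ε * (1/2) ^ k)) +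
      (hp n).sum fun k c => c * R (x + ε * (1/2) ^ k) := by
      simp only [Polynomial.sum, ← Finset.sum_add_distrib]
      apply Finset.sum_congr rfl; intro k _
      simp only [hR]; ring
    have h3 : (hp n).sum (fun k c => c * (R (x + ε * (1/2) ^ k) / ε ^ n)) =
      ((hp n).sum fun k c => c * R (x + ε * (1/2) ^ k)) / ε ^ n := by
      simp only [Polynomial.sum, Finset.sum_div]
      apply Finset.sum_congr rfl; intro k _; ring
    rw [h2, hsum] at h1
    rw [h3]
    have h4 : 0 < ε ^ n := by positivity
    have := div_nonneg h1 h4.le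
    rw [add_div] at this
    convert this using 2
    field_simp)
  simp only [mul_zero, Finset.sum_const_zero, add_zero] at h0
  have := hp_pos n
  have hf : (0:ℝ) < n.factorial := by positivity
  have h5 := nonneg_of_mul_nonneg_left h0 this
  have h6 := mul_nonneg h5 hf.le
  rwa [div_mul_cancel₀ _ hf.ne'] at h6

noncomputable def Av (h : ℝ) (f : ℝ → ℝ) : ℝ → ℝ := fun x => ∫ y in (0:ℝ)..h, f (x + y)

theorem Av_deriv (h : ℝ) (f : ℝ → ℝ) (hf : Continuous f) (x : ℝ) :
    HasDerivAt (Av h f) (fwdDiff h f x) x := by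
  have e : Av h f = fun x => (∫ y in (0:ℝ)..(x + h), f y) - ∫ y in (0:ℝ)..x, f y := by
    ext x
    simp only [Av]
    rw [intervalIntegral.integral_comp_add_left (fun y => f y), add_zero, 
      intervalIntegral.integral_interval_sub_left]
    · exact hf.intervalIntegrable _ _
    · exact hf.intervalIntegrable _ _
  rw [e]
  have h1 : ∀ y, HasDerivAt (fun x => ∫ y in (0:ℝ)..x, f y) (f y) y := fun y =>
    hf.integral_hasStrictDerivAt 0 y |>.hasDerivAt
  exact ((h1 (x + h)).comp_add_const x h).sub (h1 x)

theorem Av_cont (h : ℝ) (f : ℝ → ℝ) (hf : Continuous f) : Continuous (Av h f) :=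
  continuous_iff_continuousAt.2 fun x => (Av_deriv h f hf x).continuousAt

theorem fd_cont (h : ℝ) (f : ℝ → ℝ) (hf : Continuous f) : Continuous (fwdDiff h f) := by
  unfold fwdDiff; fun_prop

theorem Av_fd (h : ℝ) (f : ℝ → ℝ) (hf : Continuous f) : 
    fwdDiff h (Av h f) = Av h (fwdDiff h f) := by
  ext x
  simp only [fwdDiff, Av]
  rw [← intervalIntegral.integral_sub]
  · apply intervalIntegral.integral_congr; intro y _; simp only; rw [add_right_comm]
  · exact Continuous.intervalIntegrable (by fun_prop) _ _
  · exact Continuous.intervalIntegrable (by fun_prop) _ _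

theorem Av_iter (h : ℝ) (n : ℕ) : ∀ (f : ℝ → ℝ), Continuous f → 
    Continuous ((Av h)^[n] f) ∧ fwdDiff h ((Av h)^[n] f) = (Av h)^[n] (fwdDiff h f) ∧ 
    ContDiff ℝ n ((Av h)^[n] f) ∧ iteratedDeriv n ((Av h)^[n] f) = (fwdDiff h)^[n] f := by
  induction n with
  | zero => intro f hf; simp [hf, contDiff_zero]
  | succ n ih =>
    intro f hf
    obtain ⟨h1, h2, h3, h4⟩ := ih f hf
    obtain ⟨g1, g2, g3, g4⟩ := ih (fwdDiff h f) (fd_cont h f hf)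
    have hd : deriv (Av h ((Av h)^[n] f)) = (Av h)^[n] (fwdDiff h f) := by
      rw [← h2]; ext x; exact (Av_deriv h _ h1 x).deriv
    simp only [Function.iterate_succ_apply']
    refine ⟨Av_cont _ _ h1, ?_, ?_, ?_⟩
    · rw [Av_fd _ _ h1, h2]
    · push_cast
      rw [contDiff_succ_iff_deriv]
      refine ⟨fun x => (Av_deriv h _ h1 x).differentiableAt, by simp, ?_⟩
      rw [hd]; exact g3
    · rw [iteratedDeriv_succ', hd, g4]
      exact (Function.iterate_succ_apply (fwdDiff h) n f).symm.trans
        (Function.iterate_succ_apply' (fwdDiff h) n f)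

theorem Av_pos (h : ℝ) (h0 : 0 ≤ h) (p : ℝ[X]) (n : ℕ) (f : ℝ → ℝ) (hf : Continuous f)
    (hpos : ∀ x ≥ 0, ∀ ε > 0, 0 ≤ p.sum fun k c => c * f (x + ε * (1/2) ^ k)) :
    ∀ x ≥ 0, ∀ ε > 0, 0 ≤ p.sum fun k c => c * (Av h)^[n] f (x + ε * (1/2) ^ k) := by
  induction n with
  | zero => exact hpos
  | succ n ih =>
    intro x hx ε hε
    have hc := (Av_iter h n f hf).1
    simp only [Function.iterate_succ_apply']
    have : (p.sum fun k c => c * Av h ((Av h)^[n] f) (x + ε * (1/2) ^ k)) = 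
        ∫ y in (0:ℝ)..h, p.sum fun k c => c * (Av h)^[n] f ((x + y) + ε * (1/2) ^ k) := by
      simp only [Polynomial.sum]
      rw [intervalIntegral.integral_finsetSum]
      · apply Finset.sum_congr rfl; intro k _
        rw [intervalIntegral.integral_const_mul]
        simp only [Av]
        congr 1
        apply intervalIntegral.integral_congr; intro y _; simp only; rw [add_right_comm]
      · intro k _; exact Continuous.intervalIntegrable (by fun_prop) _ _
    rw [this]
    apply intervalIntegral.integral_nonneg h0
    intro y hy
    exact ih (x + y) (by linarith [hy.1]) ε hε

theorem mt_fd (f : ℝ → ℝ) (hf : Continuous f) 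
    (hpos : ∀ n, ∀ x ≥ 0, ∀ ε > 0, 0 ≤ (hp n).sum fun k c => c * f (x + ε * (1/2) ^ k))
    (h : ℝ) (h0 : 0 ≤ h) (n : ℕ) : 0 ≤ (fwdDiff h)^[n] f 0 := by
  rw [← (Av_iter h n f hf).2.2.2]
  exact mt_horn n _ (Av_iter h n f hf).2.2.1 0 (Av_pos h h0 (hp n) n f hf (hpos n) 0 le_rfl)

theorem mt_choose (m k : ℕ) : 2 ^ k * m.choose k ≤ (2 * m).choose k := by
  have h : 2 ^ k * m.descFactorial k ≤ (2 * m).descFactorial k := by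
    induction k with
    | zero => simp
    | succ k ih =>
      rw [Nat.descFactorial_succ, Nat.descFactorial_succ, pow_succ]
      calc 2 ^ k * 2 * ((m - k) * m.descFactorial k) = (2 * (m - k)) * (2 ^ k * m.descFactorial k) := by ring
        _ ≤ _ := Nat.mul_le_mul (by omega) ih
  rw [Nat.descFactorial_eq_factorial_mul_choose, Nat.descFactorial_eq_factorial_mul_choose] at h
  have := Nat.factorial_pos k
  apply Nat.le_of_mul_le_mul_left _ this
  linarith

theorem mt_desc (m k : ℕ) : ((m.descFactorial k : ℕ) : ℝ) = ∏ j ∈ Finset.range k, ((m : ℝ) - j) := by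
  induction k with
  | zero => simp
  | succ k ih =>
    rw [Nat.descFactorial_succ, Finset.prod_range_succ, ← ih]
    by_cases h : k ≤ m
    · push_cast [Nat.cast_sub h]; ring
    · have : m.descFactorial k = 0 := Nat.descFactorial_eq_zero_iff_lt.2 (by omega)
      simp [this]

theorem mt_bern (f : ℝ → ℝ) (hf : ContinuousOn f (Set.Ici 0))
    (hd : ∀ h > 0, ∀ n : ℕ, 0 ≤ (fwdDiff h)^[n] f 0) :
    ∃ c : ℕ → ℝ, (∀ n, 0 ≤ c n) ∧ ∀ x ≥ 0, HasSum (fun n => c n * x ^ n) (f x) := by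
  -- step
  let h : ℕ → ℝ := fun n => 1 / ((n : ℝ) + 1)
  have hpos : ∀ n, 0 < h n := fun n => by positivity
  have h0 : Tendsto h atTop (𝓝 0) := tendsto_one_div_add_atTop_nhds_zero_nat
  let D : ℕ → ℕ → ℝ := fun n k => (fwdDiff (h n))^[k] f 0
  have hD : ∀ n k, 0 ≤ D n k := fun n k => hd _ (hpos n) k
  have newton : ∀ n m : ℕ, HasSum (fun k => (m.choose k : ℝ) * D n k) (f (m * h n)) := by
    intro n m
    have := shift_eq_sum_fwdDiff_iter (h n) f m 0
    simp only [zero_add, nsmul_eq_mul] at this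
    rw [this]
    apply hasSum_sum_of_ne_finset_zero
    intro k hk
    simp at hk
    simp [Nat.choose_eq_zero_of_lt (show m < k by omega)]
  have term_le : ∀ n m k : ℕ, (m.choose k : ℝ) * D n k ≤ f (m * h n) := by
    intro n m k
    exact le_hasSum (newton n m) k (fun j _ => mul_nonneg (by positivity) (hD n j))
  have term_le2 : ∀ n m k : ℕ, (m.choose k : ℝ) * D n k ≤ (1/2) ^ k * f (2 * (m * h n)) := by
    intro n m k
    have h1 := term_le n (2 * m) k
    have h2 : (2:ℝ) ^ k * m.choose k ≤ ((2 * m).choose k : ℕ) := by exact_mod_cast mt_choose m k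
    have h3 := mul_le_mul_of_nonneg_right h2 (hD n k)
    have h4 : (m.choose k : ℝ) * D n k = (1/2) ^ k * (2 ^ k * m.choose k * D n k) := by
      rw [← mul_assoc, ← mul_assoc, ← mul_pow]; norm_num
    rw [h4]
    apply mul_le_mul_of_nonneg_left _ (by positivity)
    push_cast at h1
    rw [mul_assoc 2 (m:ℝ)] at h1
    linarith
  -- normalized
  have expand : ∀ n m k : ℕ, (m.choose k : ℝ) * D n k =
      (D n k / (k.factorial * h n ^ k)) * ∏ j ∈ Finset.range k, (m * h n - j * h n) := by
    intro n m k
    have e : ∏ j ∈ Finset.range k, (m * h n - j * h n) = (k.factorial * m.choose k : ℝ) * h n ^ k := by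
      have := mt_desc m k
      rw [Nat.descFactorial_eq_factorial_mul_choose] at this
      push_cast at this
      rw [this]
      simp_rw [← sub_mul]
      rw [Finset.prod_mul_distrib]; simp
    rw [e]
    have := (hpos n).ne'
    have : (k.factorial : ℝ) ≠ 0 := by positivity
    field_simp
  let U : Ultrafilter ℕ := hyperfilter ℕ
  have hU : (U : Filter ℕ) ≤ atTop := by
    rw [← Nat.cofinite_eq_atTop]; exact hyperfilter_le_cofinite
  have hprod : ∀ (m : ℕ → ℕ) (x : ℝ), Tendsto (fun n => (m n : ℝ) * h n) atTop (𝓝 x) → ∀ k,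
      Tendsto (fun n => ∏ j ∈ Finset.range k, (m n * h n - j * h n)) atTop (𝓝 (x ^ k)) := by
    intro m x hm k
    have : Tendsto (fun n => ∏ j ∈ Finset.range k, (m n * h n - j * h n)) atTop
        (𝓝 (∏ j ∈ Finset.range k, (x - j * 0))) := by
      apply tendsto_finsetProd
      intro j _
      exact hm.sub (h0.const_mul _)
    simpa using this
  have hone : ∀ n, ((n + 1 : ℕ) : ℝ) * h n = 1 := by
    intro n; simp only [h]; push_cast; field_simp
  have hc : ∀ k, ∃ c, 0 ≤ c ∧ Tendsto (fun n => D n k / (k.factorial * h n ^ k)) U (𝓝 c) := by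
    intro k
    have hcomp : IsCompact (Set.Icc 0 (f 1)) := isCompact_Icc
    have hle : ((U.map fun n : ℕ => ((n+1).choose k : ℝ) * D n k : Ultrafilter ℝ) : Filter ℝ) ≤ 𝓟 (Set.Icc 0 (f 1)) := by
      rw [le_principal_iff, Ultrafilter.coe_map, Filter.mem_map]
      refine Filter.univ_mem' ?_
      intro n
      refine ⟨mul_nonneg (by positivity) (hD n k), ?_⟩
      have := term_le n (n+1) k
      rwa [hone] at this
    obtain ⟨c, hc1, hc2⟩ := hcomp.ultrafilter_le_nhds _ hle
    refine ⟨c, hc1.1, ?_⟩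
    have t1 : Tendsto (fun n : ℕ => ((n+1).choose k : ℝ) * D n k) U (𝓝 c) := hc2
    have t2 := (hprod (fun n => n + 1) 1 (by simp only [hone]; exact tendsto_const_nhds) k)
    rw [one_pow] at t2
    have t3 := t1.div (t2.mono_left hU) one_ne_zero
    rw [div_one] at t3
    refine t3.congr' ?_
    have : ∀ᶠ n in atTop, (∏ j ∈ Finset.range k, (((n + 1 : ℕ):ℝ) * h n - j * h n)) ≠ 0 :=
      t2.eventually_ne one_ne_zero
    filter_upwards [hU this] with n hn
    simp only [Pi.div_apply]
    rw [expand, mul_div_assoc, div_self hn, mul_one]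
  choose c hc0 hcl using hc
  refine ⟨c, hc0, ?_⟩
  intro x hx
  let m : ℕ → ℕ := fun n => ⌊x * ((n:ℝ) + 1)⌋₊
  have hm : Tendsto (fun n => (m n : ℝ) * h n) atTop (𝓝 x) := by
    have := (tendsto_nat_floor_mul_div_atTop hx).comp (tendsto_atTop_add_const_right atTop (1:ℝ) tendsto_natCast_atTop_atTop)
    refine this.congr ?_
    intro n
    simp [m, h, div_eq_mul_inv]
  have hmU := hm.mono_left hU
  have hcont : ∀ (s : ℝ) (y : ℕ → ℝ), 0 ≤ s → (∀ n, 0 ≤ y n) → Tendsto y atTop (𝓝 s) →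
      Tendsto (fun n => f (y n)) atTop (𝓝 (f s)) := by
    intro s y hs hy ht
    have := hf s hs
    exact this.tendsto.comp (tendsto_nhdsWithin_iff.2 ⟨ht, Eventually.of_forall hy⟩)
  have hy0 : ∀ n, 0 ≤ (m n : ℝ) * h n := fun n => mul_nonneg (by positivity) (hpos n).le
  have l1 := hcont x _ hx hy0 hm
  have l2 := hcont (2 * x) _ (by linarith) (fun n => by have := hy0 n; positivity) (hm.const_mul 2)
  have hB : ∀ᶠ n in (U : Filter ℕ), f (2 * (m n * h n)) ≤ f (2 * x) + 1 := by
    apply hU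
    filter_upwards [l2.eventually (gt_mem_nhds (show f (2 * x) < f (2*x) + 1 by linarith))] with n hn using hn.le
  have hterm : ∀ k, Tendsto (fun n => ((m n).choose k : ℝ) * D n k) U (𝓝 (c k * x ^ k)) := by
    intro k
    simp only [expand]
    exact (hcl k).mul ((hprod m x hm k).mono_left hU)
  have hsum : Summable fun k : ℕ => (1/2 : ℝ) ^ k * (f (2 * x) + 1) :=
    (summable_geometric_of_lt_one (by norm_num) (by norm_num)).mul_right _
  have hdom : ∀ᶠ n in (U : Filter ℕ), ∀ k, ‖((m n).choose k : ℝ) * D n k‖ ≤ (1/2 : ℝ) ^ k * (f (2 * x) + 1) := by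
    filter_upwards [hB] with n hn k
    rw [Real.norm_of_nonneg (mul_nonneg (by positivity) (hD n k))]
    exact (term_le2 n (m n) k).trans (mul_le_mul_of_nonneg_left hn (by positivity))
  have L := tendsto_tsum_of_dominated_convergence hsum hterm hdom
  simp only [(newton _ _).tsum_eq] at L
  have := tendsto_nhds_unique (l1.mono_left hU) L
  rw [this]
  apply Summable.hasSum
  refine Summable.of_nonneg_of_le (fun k => mul_nonneg (hc0 k) (by positivity)) (fun k => ?_) hsum
  refine le_of_tendsto (hterm k) ?_
  filter_upwards [hdom] with n hn using (le_abs_self _).trans (hn k)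

theorem mt_cont {F : ℝ → ℝ} (hF : MTP F) : ContinuousOn F (Set.Ioi 0) := by
  have mono : Monotone fun y => F (Real.exp y) := by
    intro x y hxy
    have h := mt_pos hF (1 - X) (fun t ht => by simp; exact ht.2) (a := 0) (b := Real.exp y)
      (u := Real.exp (x - y)) le_rfl (Real.exp_pos _).le
      ⟨by linarith [Real.exp_pos (x - y)], by rw [Real.exp_le_one_iff]; linarith⟩
    rw [Polynomial.sum_over_range' _ (by simp) 2
      (lt_of_le_of_lt (show _ ≤ 1 by compute_degree) (by norm_num))] at h
    simp [Finset.sum_range_succ, coeff_one, coeff_X, ← Real.exp_add] at h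
    exact h
  have conv : ∀ y t : ℝ, 0 ≤ t → 2 * F (Real.exp y) ≤ F (Real.exp (y + t)) + F (Real.exp (y - t)) := by
    intro y t ht
    have h := mt_pos hF (C 1 - C 2 * X + X ^ 2) (fun t ht => by simp; nlinarith [sq_nonneg (1 - t)])
      (a := 0) (b := Real.exp (y + t)) (u := Real.exp (-t)) le_rfl (Real.exp_pos _).le
      ⟨by linarith [Real.exp_pos (-t)], by rw [Real.exp_le_one_iff]; linarith⟩
    rw [Polynomial.sum_over_range' _ (by simp) 3
      (lt_of_le_of_lt (show _ ≤ 2 by compute_degree) (by norm_num))] at h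
    simp [Finset.sum_range_succ, coeff_one, coeff_X, coeff_C, coeff_X_pow, ← Real.exp_add, sq] at h
    rw [← sub_eq_add_neg y t] at h
    linarith
  have cont : Continuous fun y => F (Real.exp y) := by
    rw [continuous_iff_continuousAt]
    intro y
    rw [mono.continuousAt_iff_leftLim_eq_rightLim]
    apply le_antisymm (mono.leftLim_le_rightLim le_rfl)
    have tR : ∀ s > 0, Tendsto (fun t : ℝ => F (Real.exp (y + s * t))) (𝓝[>] 0)
        (𝓝 (Function.rightLim (fun y => F (Real.exp y)) y)) := by
      intro s hs
      refine (mono.tendsto_rightLim y).comp (tendsto_nhdsWithin_iff.2 ⟨?_, ?_⟩)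
      · have : Continuous (fun t : ℝ => y + s * t) := by fun_prop
        have := this.tendsto 0
        simp only [mul_zero, add_zero] at this
        exact this.mono_left nhdsWithin_le_nhds
      · filter_upwards [self_mem_nhdsWithin] with t ht
        have : 0 < t := ht
        have : 0 < s * t := by positivity
        simp [this]
    have tL : Tendsto (fun t : ℝ => F (Real.exp (y - t))) (𝓝[>] 0)
        (𝓝 (Function.leftLim (fun y => F (Real.exp y)) y)) := by
      refine (mono.tendsto_leftLim y).comp (tendsto_nhdsWithin_iff.2 ⟨?_, ?_⟩)
      · have : Continuous (fun t : ℝ => y - t) := by fun_prop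
        have := this.tendsto 0
        simp only [sub_zero] at this
        exact this.mono_left nhdsWithin_le_nhds
      · filter_upwards [self_mem_nhdsWithin] with t ht
        have : 0 < t := ht
        simp [this]
    have := le_of_tendsto_of_tendsto ((tR 1 one_pos).const_mul 2) ((tR 3 three_pos).add tL) (by
      filter_upwards [self_mem_nhdsWithin] with t ht
      have ht : 0 < t := ht
      have := conv (y + 1 * t) (2 * t) (by positivity)
      rw [show y + 1 * t + 2 * t = y + 3 * t by ring, show y + 1 * t - 2 * t = y - t by ring] at this
      exact this)
    linarith
  have : ContinuousOn ((fun y => F (Real.exp y)) ∘ Real.log) (Set.Ioi 0) :=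
    cont.comp_continuousOn (Real.continuousOn_log.mono (by intro x hx; simp; exact (ne_of_gt hx)))
  refine this.congr ?_
  intro x hx
  simp [Real.exp_log hx]

theorem mt_ext {F : ℝ → ℝ} (hF : MTP F) (a : ℝ) (ha : 0 ≤ a) (c : ℕ → ℝ) (hc : ∀ n, 0 ≤ c n)
    (hs : ∀ x ≥ 0, HasSum (fun n => c n * x ^ n) (F (a + x))) (y : ℝ) :
    HasSum (fun n => c n * y ^ n) (F (a + y)) := by
  have hsum : ∀ x : ℝ, Summable fun n => c n * x ^ n := by
    intro x
    refine Summable.of_norm_bounded (hs |x| (abs_nonneg x)).summable ?_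
    intro n; rw [norm_mul, norm_pow, Real.norm_eq_abs, Real.norm_eq_abs, abs_of_nonneg (hc n)]
  set b : ℝ := |y - 1| + 1 with hb
  have hb0 : 0 < b := by positivity
  set v : ℝ := (y - 1) / b with hv
  have hvabs : |v| < 1 := by
    rw [hv, abs_div, abs_of_pos hb0, div_lt_one hb0]; linarith
  have hv1 : v ∈ Set.Icc (-1:ℝ) 1 := abs_le.1 hvabs.le
  have hbv : 1 + b * v = y := by rw [hv]; field_simp; ring
  obtain ⟨σ, s1, s2, s3⟩ := hF (twoM (a + 1) b v) (twoM_fin _ _ _) (twoM_ae _ _ _ hv1)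
  have := twoM_fin 1 b v
  let K : Submonoid ℝ := 
    { carrier := Set.Icc (-1:ℝ) 1
      one_mem' := by norm_num
      mul_mem' := by
        intro p q hp hq
        have := mul_le_one₀ (abs_le.2 hp) (abs_nonneg q) (abs_le.2 hq)
        rw [← abs_mul] at this
        exact abs_le.1 this }
  obtain ⟨τ, t1, t2, t3⟩ := mt_conv K measurableSet_Icc (twoM 1 b v) (twoM_ae _ _ _ hv1) c hc hsum
  have t4 : ∀ k : ℕ, HasSum (fun n => c n * (1 + b * v ^ k) ^ n) (∫ x, x ^ k ∂τ) := by
    intro k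
    have := t3 (powMonoidHom k) (by simp only [powMonoidHom, MonoidHom.coe_mk, OneHom.coe_mk]; fun_prop) (by
      intro x hx
      simp only [powMonoidHom_apply, abs_pow]
      exact pow_le_one₀ (abs_nonneg x) (abs_le.2 hx))
    simp only [powMonoidHom_apply, twoM_mom 1 b v zero_le_one hb0.le] at this
    exact this
  simp only [twoM_mom (a + 1) b v (by linarith) hb0.le] at s3
  have hlim : Tendsto (fun k : ℕ => 1 + b * v ^ k) atTop (𝓝 1) := by
    have := ((tendsto_pow_atTop_nhds_zero_of_abs_lt_one hvabs).const_mul b).const_add 1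
    simpa using this
  obtain ⟨N, hN⟩ := eventually_atTop.1 (hlim.eventually (lt_mem_nhds zero_lt_one))
  have htail := mt_tail s2 t2 N (by
    intro k hk
    rw [← s3 k, add_assoc]
    exact (hs _ (hN k hk).le).unique (t4 k))
  have h1 := s3 1
  have h2 := t4 1
  simp only [pow_one] at h1 h2
  rw [add_assoc, hbv] at h1
  rw [hbv] at h2
  rw [h1, htail]
  exact h2

theorem mt_fdF {F : ℝ → ℝ} (hF : MTP F) (a : ℝ) (ha : 0 < a) (h : ℝ) (h0 : 0 ≤ h) (n : ℕ) :
    0 ≤ (fwdDiff h)^[n] (fun x => F (a + x)) 0 := by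
  have hc : Continuous fun x : ℝ => F (a + max x 0) := by
    refine (mt_cont hF).comp_continuous (by fun_prop) ?_
    intro x
    have := le_max_right x 0
    simp only [Set.mem_Ioi]; linarith
  have := mt_fd (fun x => F (a + max x 0)) hc (by
    intro m x hx ε hε
    have := mt_pos hF (hp m) (fun t _ => hp_nonneg m t) (a := a + x) (b := ε) (u := 1/2) (by linarith) hε.le
      (by norm_num)
    convert this using 3 with k c
    have : 0 ≤ x + ε * (1/2)^k := by positivity
    rw [max_eq_left this, add_assoc]) h h0 n
  rw [fwdDiff_iter_eq_sum_shift] at this ⊢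
  convert this using 5 with k hk
  simp only [zero_add]
  rw [max_eq_left (by positivity)]

theorem mt_main {F : ℝ → ℝ} (hF : MTP F) :
    ∃ c : ℕ → ℝ, (∀ n, 0 ≤ c n) ∧ ∀ x : ℝ, HasSum (fun n => c n * x ^ n) (F x) := by
  have hcont : Continuous F := by
    obtain ⟨c, hc, hs⟩ := mt_bern (fun x => F (1 + x)) (by
      refine (mt_cont hF).comp (by fun_prop) ?_
      intro x hx
      have : 0 ≤ x := hx
      simp only [Set.mem_Ioi]; linarith) (fun h hh n => mt_fdF hF 1 one_pos h hh.le n)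
    have hs2 := mt_ext hF 1 zero_le_one c hc hs
    have hcG : Continuous fun y => ∑' n, c n * y ^ n := by
      rw [continuous_iff_continuousAt]
      intro y
      have : ContinuousOn (fun y : ℝ => ∑' n, c n * y ^ n) (Metric.ball 0 (|y| + 1)) := by
        apply continuousOn_tsum (u := fun n => c n * (|y| + 1) ^ n)
        · intro i; fun_prop
        · exact (hs2 _).summable
        · intro n x hx
          simp at hx
          rw [norm_mul, norm_pow, Real.norm_eq_abs, Real.norm_eq_abs, abs_of_nonneg (hc n)]
          have := hc n
          gcongr
      exact this.continuousAt (Metric.isOpen_ball.mem_nhds (by simp))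
    have e : F = fun x => ∑' n, c n * (x - 1) ^ n := by
      ext x
      rw [(hs2 (x - 1)).tsum_eq]; simp
    rw [e]
    exact hcG.comp (by fun_prop : Continuous fun x : ℝ => x - 1)
  obtain ⟨c, hc, hs⟩ := mt_bern (fun x => F (0 + x)) (by fun_prop) (by
    intro h hh n
    have hl : Tendsto (fun a : ℝ => (fwdDiff h)^[n] (fun x => F (a + x)) 0) (𝓝[>] 0)
        (𝓝 ((fwdDiff h)^[n] (fun x => F (0 + x)) 0)) := by
      simp only [fwdDiff_iter_eq_sum_shift]
      have : Continuous fun a : ℝ => ∑ k ∈ Finset.range (n + 1), ((-1 : ℤ) ^ (n - k) * n.choose k) • F (a + (0 + k • h)) := by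
        fun_prop
      exact (this.tendsto 0).mono_left nhdsWithin_le_nhds
    refine ge_of_tendsto hl ?_
    filter_upwards [self_mem_nhdsWithin] with a ha
    exact mt_fdF hF a ha h hh.le n)
  refine ⟨c, hc, ?_⟩
  intro x
  have := mt_ext hF 0 le_rfl c hc hs x
  simpa using this

theorem red {d : ℕ} (hd : 1 ≤ d) {F : ℝ → ℝ}
    (H : ∀ μ : Measure (Fin d → ℝ), IsAdmissibleD μ →
      μ (Set.pi Set.univ fun _ => Set.Icc (-1 : ℝ) 1)ᶜ = 0 →
      ∃ σ : Measure (Fin d → ℝ), IsAdmissibleD σ ∧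
        σ (Set.pi Set.univ fun _ => Set.Icc (-1 : ℝ) 1)ᶜ = 0 ∧
        ∀ α : Fin d → ℕ, F (momentD μ α) = momentD σ α) : MTP F := by
  intro μ hμ hs
  let i0 : Fin d := ⟨0, hd⟩
  let g : ℝ → Fin d → ℝ := fun x => Function.update 1 i0 x
  have hg : Measurable g := measurable_update _
  have hmeas : ∀ α : Fin d → ℕ, Measurable fun x : Fin d → ℝ => ∏ i, x i ^ α i := by
    intro α; fun_prop
  have hgp : ∀ (α : Fin d → ℕ) (x : ℝ), ∏ i, g x i ^ α i = x ^ α i0 := by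
    intro α x
    rw [Finset.prod_eq_single i0]
    · simp [g]
    · intro j _ hj; simp [g, hj]
    · simp
  have hsupp : MeasurableSet (Set.pi Set.univ fun _ : Fin d => Set.Icc (-1 : ℝ) 1) :=
    MeasurableSet.univ_pi fun _ => measurableSet_Icc
  obtain ⟨σ, s1, s2, s3⟩ := H (μ.map g) (by
    intro α
    rw [integrable_map_measure (hmeas α).aestronglyMeasurable hg.aemeasurable]
    simp only [Function.comp_def, hgp]
    exact mt_int hs (by fun_prop)) (by
    rw [Measure.map_apply hg hsupp.compl]
    refine measure_mono_null ?_ (ae_iff.1 hs)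
    intro x hx hx2
    apply hx
    intro j _
    by_cases hj : j = i0
    · subst hj; simpa [g] using hx2
    · simp [g, hj])
  have hfin : IsFiniteMeasure σ := by
    have := s1 0
    simp only [Pi.zero_apply, pow_zero, Finset.prod_const_one] at this
    exact (integrable_const_iff_isFiniteMeasure one_ne_zero).1 this
  have he : Measurable fun x : Fin d → ℝ => x i0 := measurable_pi_apply _
  refine ⟨σ.map fun x => x i0, inferInstance, ?_, ?_⟩
  · refine (ae_map_iff (p := fun x => x ∈ Set.Icc (-1:ℝ) 1) he.aemeasurable measurableSet_Icc).2 ?_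
    have : ∀ᵐ x ∂σ, x ∈ Set.pi Set.univ fun _ : Fin d => Set.Icc (-1 : ℝ) 1 := s2
    filter_upwards [this] with x hx using hx i0 trivial
  · intro k
    have h3 := s3 (Function.update 0 i0 k)
    have e : ∀ x : Fin d → ℝ, ∏ i, x i ^ (Function.update (0 : Fin d → ℕ) i0 k) i = x i0 ^ k := by
      intro x
      rw [Finset.prod_eq_single i0]
      · simp
      · intro j _ hj; simp [hj]
      · simp
    unfold momentD at h3
    rw [integral_map hg.aemeasurable (hmeas _).aestronglyMeasurable] at h3
    simp only [e] at h3
    rw [integral_map he.aemeasurable (by fun_prop)]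
    simpa [g] using h3

/-- A function maps the moment families of admissible measures on `[-1,1]^d` into
themselves entrywise iff it is an absolutely monotonic entire function. -/
theorem moment_transform_multidim (d : ℕ) (hd : 1 ≤ d) (F : ℝ → ℝ) :
    (∀ μ : Measure (Fin d → ℝ), IsAdmissibleD μ →
      μ (Set.pi Set.univ fun _ => Set.Icc (-1 : ℝ) 1)ᶜ = 0 →
      ∃ σ : Measure (Fin d → ℝ), IsAdmissibleD σ ∧
        σ (Set.pi Set.univ fun _ => Set.Icc (-1 : ℝ) 1)ᶜ = 0 ∧
        ∀ α : Fin d → ℕ, F (momentD μ α) = momentD σ α) ↔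
    AbsolutelyMonotonicEntire F := by
  constructor
  · intro H
    exact mt_main (red hd H)
  · rintro ⟨c, hc, hs⟩ μ hμ hsupp
    have hfin : IsFiniteMeasure μ := by
      have := hμ 0
      simp only [Pi.zero_apply, pow_zero, Finset.prod_const_one] at this
      exact (integrable_const_iff_isFiniteMeasure one_ne_zero).1 this
    let K : Submonoid (Fin d → ℝ) :=
      { carrier := Set.pi Set.univ fun _ => Set.Icc (-1:ℝ) 1
        one_mem' := by intro i _; norm_num
        mul_mem' := by
          intro p q hp hq i hi
          have := mul_le_one₀ (abs_le.2 (hp i hi)) (abs_nonneg (q i)) (abs_le.2 (hq i hi))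
          rw [← abs_mul] at this
          exact abs_le.1 this }
    have hK : MeasurableSet (K : Set (Fin d → ℝ)) := MeasurableSet.univ_pi fun _ => measurableSet_Icc
    obtain ⟨σ, t1, t2, t3⟩ := mt_conv K hK μ hsupp c hc (fun x => (hs x).summable)
    have hmeas : ∀ α : Fin d → ℕ, Measurable fun x : Fin d → ℝ => ∏ i, x i ^ α i := by
      intro α; fun_prop
    have hbd : ∀ (α : Fin d → ℕ), ∀ x ∈ K, |∏ i, x i ^ α i| ≤ 1 := by
      intro α x hx
      rw [Finset.abs_prod]
      apply Finset.prod_le_one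
      · intro i _; positivity
      · intro i _
        rw [abs_pow]
        exact pow_le_one₀ (abs_nonneg _) (abs_le.2 (hx i trivial))
    refine ⟨σ, ?_, t2, ?_⟩
    · intro α
      refine Integrable.of_bound (hmeas α).aestronglyMeasurable 1 ?_
      filter_upwards [t2] with x hx using hbd α x hx
    · intro α
      let χ : (Fin d → ℝ) →* ℝ :=
        { toFun := fun x => ∏ i, x i ^ α i
          map_one' := by simp
          map_mul' := by intro x y; simp [mul_pow, Finset.prod_mul_distrib] }
      exact (hs _).unique (t3 χ (hmeas α) (hbd α))
end

section
/- Fix an integer m ≥ 1 and let F : ℝ^m → ℝ. The following are equivalent: (1) F applied entrywise maps every m-tuple of moment sequences of admissible measures supported in [−1,1] to a moment sequence of an admissible measure on ℝ, i.e., for all admissible μ₁,…,μ_m supported in [−1,1] there is an admissible measure σ on ℝ with F(s_k(μ₁),…,s_k(μ_m)) = s_k(σ) for all k ≥ 0; (2) for every N ≥ 1 and every m-tuple (A₁,…,A_m) of N×N real positive semidefinite matrices, the matrix F[A₁,…,A_m] with (i,j) entry F(a_{1,ij},…,a_{m,ij}) is positive semidefinite; (3) F is absolutely monotonic on [0,∞)^m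 (continuous on [0,∞)^m with all mixed partial derivatives D^α F existing and non-negative on the interior (0,∞)^m) and F agrees on ℝ^m with the restriction of an entire function on ℂ^m; equivalently, F(x) = ∑_{α∈ℕ₀^m} c_α x^α with all c_α ≥ 0 and the series converging for every x ∈ ℝ^m. -/
open MeasureTheory

/-- An admissible measure: a non-negative Borel measure on `ℝ` all of whose absolute
moments are finite. -/
def IsAdmissible (μ : Measure ℝ) : Prop := ∀ k : ℕ, Integrable (fun x => x ^ k) μ

/-- The `k`-th power moment of a measure. -/
noncomputable def moment (μ : Measure ℝ) (k : ℕ) : ℝ := ∫ x, x ^ k ∂μ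

namespace MT
open Polynomial Filter Topology Asymptotics

/-- finitely atomic moment sequences on `[-1,1]` -/
inductive MS : (ℕ → ℝ) → Prop
  | pow (u : ℝ) (hu : |u| ≤ 1) : MS (fun k => u ^ k)
  | add {s t : ℕ → ℝ} : MS s → MS t → MS (fun k => s k + t k)
  | smul {s : ℕ → ℝ} (c : ℝ) (hc : 0 ≤ c) : MS s → MS (fun k => c * s k)

lemma MS.const (c : ℝ) (hc : 0 ≤ c) : MS (fun _ => c) := by
  simpa using MS.smul c hc (MS.pow 1 (by simp))

lemma MS.mul {s t : ℕ → ℝ} (hs : MS s) (ht : MS t) : MS (fun k => s k * t k) := by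
  induction hs with
  | pow u hu =>
    induction ht with
    | pow v hv =>
      simp only [← mul_pow]
      exact MS.pow _ (by rw [abs_mul]; exact mul_le_one₀ hu (abs_nonneg _) hv)
    | add _ _ h1 h2 => simp only [mul_add]; exact MS.add h1 h2
    | smul c hc _ h1 => simp only [mul_left_comm _ c]; exact MS.smul c hc h1
  | add _ _ h1 h2 => simp only [add_mul]; exact MS.add h1 h2
  | smul c hc _ h1 => simp only [mul_assoc]; exact MS.smul c hc h1

lemma MS.even {s : ℕ → ℝ} (hs : MS s) (k : ℕ) : 0 ≤ s (2 * k) ∧ s (2 * k) ≤ s 0 := by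
  induction hs with
  | pow u hu =>
    simp only [pow_mul, pow_zero]
    refine ⟨by positivity, pow_le_one₀ (by positivity) ?_⟩
    rw [← sq_abs]; exact pow_le_one₀ (abs_nonneg _) hu
  | add _ _ h1 h2 => constructor <;> linarith [h1.1, h1.2, h2.1, h2.2]
  | smul c hc _ h1 => exact ⟨mul_nonneg hc h1.1, mul_le_mul_of_nonneg_left h1.2 hc⟩

/-- the linear functional of a sequence -/
noncomputable def Lf (s : ℕ → ℝ) : ℝ[X] →ₗ[ℝ] ℝ :=
  Polynomial.lsum (fun k => s k • LinearMap.id)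

lemma Lf_mono (s : ℕ → ℝ) (k : ℕ) (c : ℝ) : Lf s (Polynomial.monomial k c) = s k * c := by
  simp [Lf, Polynomial.lsum, Polynomial.sum_monomial_index]

lemma Lf_X (s : ℕ → ℝ) (k : ℕ) : Lf s (X ^ k) = s k := by
  rw [← Polynomial.monomial_one_right_eq_X_pow, Lf_mono, mul_one]

lemma Lf_one (s : ℕ → ℝ) : Lf s 1 = s 0 := by
  rw [← pow_zero X, Lf_X]

/-- positive bounded functionals -/
def PB (L : ℝ[X] →ₗ[ℝ] ℝ) : Prop :=
  (∀ q : ℝ[X], 0 ≤ L (q * q)) ∧ ∀ q : ℝ[X], ∃ C : ℝ, ∀ k, |L (q * X ^ k)| ≤ C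

lemma bdd_of (L : ℝ[X] →ₗ[ℝ] ℝ) (C : ℝ) (h : ∀ k, |L (X ^ k)| ≤ C) (q : ℝ[X]) :
    ∃ C : ℝ, ∀ k, |L (q * X ^ k)| ≤ C := by
  induction q using Polynomial.induction_on' with
  | add p q hp hq =>
    obtain ⟨A, hA⟩ := hp
    obtain ⟨B, hB⟩ := hq
    refine ⟨A + B, fun k => ?_⟩
    rw [add_mul, map_add]
    exact (abs_add_le _ _).trans (add_le_add (hA k) (hB k))
  | monomial n a =>
    refine ⟨|a| * C, fun k => ?_⟩
    have : Polynomial.monomial n a * X ^ k = a • (X ^ (n + k) : ℝ[X]) := by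
      rw [← Polynomial.C_mul_X_pow_eq_monomial, Polynomial.smul_eq_C_mul, mul_assoc, ← pow_add]
    rw [this, map_smul, smul_eq_mul, abs_mul]
    exact mul_le_mul_of_nonneg_left (h _) (abs_nonneg _)

lemma convex_bdd (a : ℕ → ℝ) (hc : ∀ k, 2 * a (k + 1) ≤ a k + a (k + 2)) (C : ℝ)
    (hb : ∀ k, a k ≤ C) : a 1 ≤ a 0 := by
  by_contra h
  push Not at h
  have h1 : ∀ k, a 1 - a 0 ≤ a (k + 1) - a k := by
    intro k
    induction k with
    | zero => simp
    | succ k ih => have := hc k; linarith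
  have h2 : ∀ k : ℕ, a 0 + k * (a 1 - a 0) ≤ a k := by
    intro k
    induction k with
    | zero => simp
    | succ k ih => have := h1 k; push_cast; linarith
  obtain ⟨n, hn⟩ := exists_nat_gt ((C - a 0) / (a 1 - a 0))
  rw [div_lt_iff₀ (by linarith)] at hn
  linarith [h2 n, hb n]

lemma PB.sq {L : ℝ[X] →ₗ[ℝ] ℝ} (h : PB L) (q : ℝ[X]) : L (q * q * X ^ 2) ≤ L (q * q) := by
  obtain ⟨C, hC⟩ := h.2 (q * q)
  have := convex_bdd (fun k => L (q * q * X ^ (2 * k))) ?_ C (fun k => (le_abs_self _).trans (hC _))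
  · simpa using this
  · intro k
    have := h.1 (q * (X ^ k - X ^ (k + 2)))
    have e : q * (X ^ k - X ^ (k + 2)) * (q * (X ^ k - X ^ (k + 2)))
      = q * q * X ^ (2 * k) - (2 : ℝ) • (q * q * X ^ (2 * (k + 1))) + q * q * X ^ (2 * (k + 2)) := by
      rw [Polynomial.smul_eq_C_mul]
      have : (Polynomial.C (2 : ℝ) : ℝ[X]) = 2 := by simp [map_ofNat]
      rw [this]; ring
    rw [e, map_add, map_sub, map_smul, smul_eq_mul] at this
    linarith

lemma PB.bddmul {L : ℝ[X] →ₗ[ℝ] ℝ} (h : PB L) (p : ℝ[X]) (q : ℝ[X]) :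
    ∃ C : ℝ, ∀ k, |(L ∘ₗ LinearMap.mulLeft ℝ p) (q * X ^ k)| ≤ C := by
  obtain ⟨C, hC⟩ := h.2 (p * q)
  exact ⟨C, fun k => by simpa [mul_assoc] using hC k⟩

lemma PB.one_sub {L : ℝ[X] →ₗ[ℝ] ℝ} (h : PB L) : PB (L ∘ₗ LinearMap.mulLeft ℝ (1 - X ^ 2)) := by
  refine ⟨fun q => ?_, h.bddmul _⟩
  have := h.sq q
  have e : (1 - X ^ 2) * (q * q) = q * q - q * q * X ^ 2 := by ring
  simp only [LinearMap.comp_apply, LinearMap.mulLeft_apply, e, map_sub]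
  linarith

lemma PB.one_add {L : ℝ[X] →ₗ[ℝ] ℝ} (h : PB L) (ε : ℝ) (hε : ε = 1 ∨ ε = -1) :
    PB (L ∘ₗ LinearMap.mulLeft ℝ (1 + C ε * X)) := by
  refine ⟨fun q => ?_, h.bddmul _⟩
  have h1 := h.sq q
  have h2 := h.1 (q * (1 + C ε * X))
  have e2 : (C ε * C ε : ℝ[X]) = 1 := by
    rw [← C_mul]; rcases hε with rfl | rfl <;> simp
  have e : q * (1 + C ε * X) * (q * (1 + C ε * X)) = (2 : ℝ) • ((1 + C ε * X) * (q * q))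
      - (q * q) + q * q * X ^ 2 := by
    rw [Polynomial.smul_eq_C_mul]
    have : (Polynomial.C (2 : ℝ) : ℝ[X]) = 2 := by simp [map_ofNat]
    rw [this]
    linear_combination (q * q * X ^ 2) * e2
  rw [e, map_add, map_sub, map_smul, smul_eq_mul] at h2
  simp only [LinearMap.comp_apply, LinearMap.mulLeft_apply]
  linarith

lemma PB.pow {L : ℝ[X] →ₗ[ℝ] ℝ} (h : PB L) (n : ℕ) :
    PB (L ∘ₗ LinearMap.mulLeft ℝ ((1 - X ^ 2) ^ n)) := by
  induction n with
  | zero => simpa using h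
  | succ n ih =>
    have := ih.one_sub
    rw [LinearMap.comp_assoc, ← LinearMap.mulLeft_mul] at this
    rwa [pow_succ]

lemma PB.main {L : ℝ[X] →ₗ[ℝ] ℝ} (h : PB L) (n : ℕ) (ε : ℝ) (hε : ε = 1 ∨ ε = -1) :
    0 ≤ L ((1 - X ^ 2) ^ n * (1 + C ε * X)) := by
  have := ((h.pow n).one_add ε hε).1 1
  simpa using this

/-- the Hankel condition -/
def HC {m : ℕ} (F : (Fin m → ℝ) → ℝ) : Prop :=
  ∀ s : Fin m → ℕ → ℝ, (∀ l, MS (s l)) → ∀ q : ℝ[X], 0 ≤ Lf (fun k => F (fun l => s l k)) (q * q)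

variable {m : ℕ} {F : (Fin m → ℝ) → ℝ}

lemma HC.nonneg (h : HC F) (a : Fin m → ℝ) (ha : ∀ l, 0 ≤ a l) : 0 ≤ F a := by
  have := h (fun l _ => a l) (fun l => MS.const _ (ha l)) 1
  simpa [Lf_one] using this

lemma HC.mono (h : HC F) (a b : Fin m → ℝ) (ha : ∀ l, 0 ≤ a l) (hb : ∀ l, a l ≤ b l) :
    F a ≤ F b := by
  have := h (fun l k => (b l - a l) * 0 ^ k + a l)
    (fun l => (MS.smul _ (sub_nonneg.2 (hb l)) (MS.pow 0 (by simp))).add (MS.const _ (ha l))) (1 - X)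
  have e : ((1 - X) * (1 - X) : ℝ[X]) = X ^ 0 - X ^ 1 - X ^ 1 + X ^ 2 := by ring
  rw [e] at this
  simp only [map_add, map_sub, Lf_X] at this
  simp at this
  linarith

lemma HC.PB (h : HC F) (s : Fin m → ℕ → ℝ) (hs : ∀ l, MS (s l)) :
    PB (Lf (fun k => F (fun l => s l k))) := by
  refine ⟨h s hs, bdd_of _ (F (fun l => s l 0)) ?_⟩
  have hev : ∀ k, 0 ≤ F (fun l => s l (2 * k)) ∧ F (fun l => s l (2 * k)) ≤ F (fun l => s l 0) :=
    fun k => ⟨h.nonneg _ fun l => ((hs l).even k).1,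
      h.mono _ _ (fun l => ((hs l).even k).1) (fun l => ((hs l).even k).2)⟩
  intro k
  rw [Lf_X]
  rcases Nat.even_or_odd' k with ⟨j, rfl | rfl⟩
  · rw [abs_of_nonneg (hev j).1]; exact (hev j).2
  · have h1 := h s hs (X ^ j - X ^ (j + 1))
    have h2 := h s hs (X ^ j + X ^ (j + 1))
    have e1 : ((X ^ j - X ^ (j + 1)) * (X ^ j - X ^ (j + 1)) : ℝ[X])
      = X ^ (2 * j) - X ^ (2 * j + 1) - X ^ (2 * j + 1) + X ^ (2 * (j + 1)) := by ring
    have e2 : ((X ^ j + X ^ (j + 1)) * (X ^ j + X ^ (j + 1)) : ℝ[X])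
      = X ^ (2 * j) + X ^ (2 * j + 1) + X ^ (2 * j + 1) + X ^ (2 * (j + 1)) := by ring
    rw [e1] at h1
    rw [e2] at h2
    simp only [map_add, map_sub, Lf_X] at h1 h2
    have := (hev j).2
    have := (hev (j + 1)).2
    rw [abs_le]; constructor <;> linarith

lemma HC.diff (h : HC F) (s : Fin m → ℕ → ℝ) (hs : ∀ l, MS (s l)) :
    |F (fun l => s l 1) - F (fun l => s l 3)| ≤ F (fun l => s l 0) - F (fun l => s l 2) := by
  have h1 := (h.PB s hs).main 1 1 (Or.inl rfl)
  have h2 := (h.PB s hs).main 1 (-1) (Or.inr rfl)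
  have e1 : ((1 - X ^ 2) ^ 1 * (1 + C 1 * X) : ℝ[X]) = X ^ 0 + X ^ 1 - X ^ 2 - X ^ 3 := by
    simp; ring
  have e2 : ((1 - X ^ 2) ^ 1 * (1 + C (-1) * X) : ℝ[X]) = X ^ 0 - X ^ 1 - X ^ 2 + X ^ 3 := by
    simp; ring
  rw [e1] at h1
  rw [e2] at h2
  simp only [map_add, map_sub, Lf_X] at h1 h2
  rw [abs_le]; constructor <;> linarith

lemma MS.exists (x y t : ℝ) (h1 : |x - y| ≤ 1) (h2 : |x| + 10 ≤ t) :
    ∃ s, MS s ∧ s 1 = x ∧ s 3 = y ∧ s 0 = t ∧ s 2 = t - 2 * |x - y| := by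
  have key : ∃ r : ℝ, (r = 1/2 ∨ r = -1/2) ∧ |x - y| * r = (x - y) / 2 := by
    rcases le_total 0 (x - y) with h | h
    · exact ⟨1/2, Or.inl rfl, by rw [abs_of_nonneg h]; ring⟩
    · exact ⟨-1/2, Or.inr rfl, by rw [abs_of_nonpos h]; ring⟩
  obtain ⟨r, hr, hr2⟩ := key
  have hr1 : |r| ≤ 1 := by rcases hr with rfl | rfl <;> norm_num [abs_le]
  have hr4 : r ^ 2 = 1 / 4 := by rcases hr with rfl | rfl <;> norm_num
  have hr5 : r ^ 3 = r / 4 := by rcases hr with rfl | rfl <;> norm_num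
  obtain ⟨hx1, hx2⟩ := abs_le.1 (le_refl |x|)
  obtain ⟨hd1, hd2⟩ := abs_le.1 (le_refl |x - y|)
  refine ⟨_, ((MS.smul ((t - 8/3 * |x - y| + (x - 4/3 * (x - y))) / 2) ?_ (MS.pow 1 (by simp))).add
    (MS.smul ((t - 8/3 * |x - y| - (x - 4/3 * (x - y))) / 2) ?_ (MS.pow (-1) (by simp)))).add
    (MS.smul (8/3 * |x - y|) (by positivity) (MS.pow r hr1)), ?_, ?_, ?_, ?_⟩
  · linarith
  · linarith
  · linear_combination (8/3) * hr2
  · rw [hr5]; linear_combination (2/3) * hr2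
  · ring
  · rw [hr4]; ring

lemma HC.continuous (h : HC F) : Continuous F := by
  rw [continuous_iff_continuousAt]
  intro x
  -- a continuity point of the diagonal
  have hmono : MonotoneOn (fun t : ℝ => F (fun _ => t)) (Set.Ici 0) := fun a ha b _ hab =>
    h.mono _ _ (fun _ => ha) (fun _ => hab)
  have hm' : Monotone (fun t : ℝ => F (fun _ => max t 0)) := fun a b hab =>
    hmono (Set.mem_Ici.2 (le_max_right _ _)) (Set.mem_Ici.2 (le_max_right _ _)) (max_le_max_right _ hab)
  have hcount := hm'.countable_not_continuousAt
  obtain ⟨t, htc, ht⟩ : ∃ t : ℝ, ContinuousAt (fun t : ℝ => F (fun _ => max t 0)) t ∧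
      ∀ l, |x l| + 10 ≤ t ∧ 10 ≤ t := by
    obtain ⟨M, hM⟩ : ∃ M : ℝ, 10 ≤ M ∧ ∀ l, |x l| + 10 ≤ M := by
      refine ⟨∑ l, |x l| + 10, ?_, fun l => ?_⟩
      · have : 0 ≤ ∑ l, |x l| := Finset.sum_nonneg fun _ _ => abs_nonneg _
        linarith
      · have := Finset.single_le_sum (f := fun l => |x l|) (fun _ _ => abs_nonneg _) (Finset.mem_univ l)
        linarith
    have := (hcount.dense_compl ℝ).exists_mem_open (isOpen_Ioi (a := M)) ⟨M + 1, by simp⟩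
    obtain ⟨t, h1, h2⟩ := this
    refine ⟨t, by simpa using h1, fun l => ⟨(hM.2 l).trans h2.le, hM.1.trans h2.le⟩⟩
  rcases Nat.eq_zero_or_pos m with rfl | hm
  · exact (continuous_of_const fun a b => by rw [Subsingleton.elim a b]).continuousAt
  have ht10 : 10 ≤ t := (ht ⟨0, hm⟩).2
  have hev : ∀ᶠ y in 𝓝 x, |F y - F x| ≤
      F (fun _ => max t 0) - F (fun _ => max (t - 2 * ‖y - x‖) 0) := by
    filter_upwards [Metric.ball_mem_nhds x one_pos] with y hy
    have hy1 : ‖y - x‖ < 1 := by simpa [dist_eq_norm] using hy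
    have hl : ∀ l, |x l - y l| ≤ ‖y - x‖ := fun l => by
      have := norm_le_pi_norm (y - x) l
      rw [abs_sub_comm]; simpa using this
    choose s hs h1 h3 h0 h2 using fun l => MS.exists (x l) (y l) t ((hl l).trans hy1.le) (ht l).1
    have := h.diff s hs
    simp only [h1, h3, h0, h2] at this
    rw [abs_sub_comm]
    have hle : F (fun _ => max (t - 2 * ‖y - x‖) 0) ≤ F (fun l => t - 2 * |x l - y l|) := by
      refine h.mono _ _ (fun _ => le_max_right _ _) fun l => ?_
      rw [max_eq_left (by linarith)]
      linarith [hl l]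
    rw [max_eq_left (by linarith : (0:ℝ) ≤ t)]
    linarith
  rw [ContinuousAt, tendsto_iff_norm_sub_tendsto_zero]
  refine squeeze_zero' (Eventually.of_forall fun _ => norm_nonneg _) hev ?_
  have : Tendsto (fun y => t - 2 * ‖y - x‖) (𝓝 x) (𝓝 t) := by
    have : Continuous (fun y => t - 2 * ‖y - x‖) := by fun_prop
    simpa using this.tendsto x
  simpa using (tendsto_const_nhds (x := F fun _ => max t 0)).sub (htc.tendsto.comp this)

end MT

namespace MT
open Polynomial Filter Topology Asymptotics

/-- asymptotic expansion at `0+` -/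
def AE (f : ℝ → ℝ) (a : ℕ → ℝ) : Prop :=
  ∀ J : ℕ, (fun y => f y - ∑ i ∈ Finset.range J, a i * y ^ i) =O[𝓝[>] 0] (fun y => y ^ J)

lemma pos_ev : ∀ᶠ y : ℝ in 𝓝[>] 0, 0 < y := eventually_mem_nhdsWithin

lemma lt_ev {ε : ℝ} (hε : 0 < ε) : ∀ᶠ y : ℝ in 𝓝[>] 0, y < ε :=
  nhdsWithin_le_nhds (gt_mem_nhds hε)

lemma AE_of_hasSum {f : ℝ → ℝ} {a : ℕ → ℝ} {ε : ℝ} (hε : 0 < ε)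
    (h : ∀ y, 0 < y → y < ε → HasSum (fun i => a i * y ^ i) (f y)) : AE f a := by
  intro J
  have hs := (h (ε / 2) (by linarith) (by linarith)).summable
  have hs' : Summable (fun i => |a (i + J)| * (ε / 2) ^ i) := by
    have h1 := ((summable_nat_add_iff J).2 hs).abs.mul_right ((ε / 2) ^ J)⁻¹
    refine h1.congr fun i => ?_
    have : (ε / 2) ^ J ≠ 0 := by positivity
    rw [abs_mul, abs_of_nonneg (by positivity : 0 ≤ (ε / 2) ^ (i + J)), pow_add]
    field_simp
  refine IsBigO.of_bound (∑' i, |a (i + J)| * (ε / 2) ^ i) ?_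
  filter_upwards [pos_ev, lt_ev (half_pos hε)] with y hy hy2
  have h2 := h y hy (by linarith)
  rw [← h2.tsum_eq, ← h2.summable.sum_add_tsum_nat_add J, add_sub_cancel_left]
  have h3 : ∀ i, a (i + J) * y ^ (i + J) = (a (i + J) * y ^ i) * y ^ J := fun i => by ring
  simp only [h3]
  rw [tsum_mul_right, norm_mul]
  refine mul_le_mul_of_nonneg_right ?_ (norm_nonneg _)
  refine tsum_of_norm_bounded hs'.hasSum fun i => ?_
  rw [norm_mul, Real.norm_eq_abs, norm_pow, Real.norm_eq_abs, abs_of_pos hy]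
  gcongr

lemma pow_tendsto (J : ℕ) : Tendsto (fun y : ℝ => y ^ (J + 1)) (𝓝[>] 0) (𝓝 0) := by
  have : Continuous (fun y : ℝ => y ^ (J + 1)) := by fun_prop
  have h := (this.tendsto 0).mono_left (nhdsWithin_le_nhds (s := Set.Ioi 0))
  simpa using h

lemma AE_uniq_aux (J : ℕ) : ∀ a : ℕ → ℝ,
    (fun y : ℝ => ∑ i ∈ Finset.range J, a i * y ^ i) =O[𝓝[>] 0] (fun y => y ^ J) →
    ∀ i < J, a i = 0 := by
  induction J with
  | zero => intro a _ i hi; omega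
  | succ J ih =>
    intro a h
    have h0 : a 0 = 0 := by
      have t1 := h.trans_tendsto (pow_tendsto J)
      have hc : Continuous (fun y : ℝ => ∑ i ∈ Finset.range (J + 1), a i * y ^ i) := by fun_prop
      have t2 := (hc.tendsto 0).mono_left (nhdsWithin_le_nhds (s := Set.Ioi 0))
      have t3 := tendsto_nhds_unique t1 t2
      rw [t3, Finset.sum_range_succ']
      simp
    have h1 : (fun y : ℝ => ∑ i ∈ Finset.range J, a (i + 1) * y ^ i) =O[𝓝[>] 0] (fun y => y ^ J) := by
      obtain ⟨C, hC⟩ := h.bound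
      refine IsBigO.of_bound C ?_
      filter_upwards [hC, pos_ev] with y hy hp
      rw [Finset.sum_range_succ', h0] at hy
      have e : ∑ k ∈ Finset.range J, a (k + 1) * y ^ (k + 1) + 0 * y ^ 0
        = (∑ k ∈ Finset.range J, a (k + 1) * y ^ k) * y := by
        rw [Finset.sum_mul]; simp [pow_succ, mul_assoc]
      rw [e, pow_succ, norm_mul, norm_mul, ← mul_assoc] at hy
      exact le_of_mul_le_mul_right hy (by simpa using hp.ne')
    intro i hi
    cases i with
    | zero => exact h0
    | succ i => exact ih _ h1 i (by omega)

lemma AE_uniq' {f : ℝ → ℝ} {a b : ℕ → ℝ} {J : ℕ}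
    (ha : (fun y => f y - ∑ i ∈ Finset.range J, a i * y ^ i) =O[𝓝[>] 0] (fun y => y ^ J))
    (hb : (fun y => f y - ∑ i ∈ Finset.range J, b i * y ^ i) =O[𝓝[>] 0] (fun y => y ^ J)) :
    ∀ i < J, a i = b i := by
  intro i hi
  have := AE_uniq_aux J (fun i => a i - b i) ?_ i hi
  · linarith
  · refine (hb.sub ha).congr_left fun y => ?_
    simp only [sub_mul, Finset.sum_sub_distrib]; ring

lemma AE.uniq {f : ℝ → ℝ} {a b : ℕ → ℝ} (ha : AE f a) (hb : AE f b) : a = b := by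
  ext i
  exact AE_uniq' (ha (i + 1)) (hb (i + 1)) i (by omega)

/-- everywhere convergent nonnegative power series on `[0,∞)` -/
def PS (f : ℝ → ℝ) : Prop :=
  ∃ c : ℕ → ℝ, (∀ n, 0 ≤ c n) ∧ ∀ y, 0 ≤ y → HasSum (fun n => c n * y ^ n) (f y)

lemma coeff_unique {f : ℝ → ℝ} {c d : ℕ → ℝ} (hc : ∀ y, 0 ≤ y → HasSum (fun n => c n * y ^ n) (f y))
    (hd : ∀ y, 0 ≤ y → HasSum (fun n => d n * y ^ n) (f y)) : c = d :=
  (AE_of_hasSum one_pos fun y hy _ => hc y hy.le).uniq (AE_of_hasSum one_pos fun y hy _ => hd y hy.le)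

/-- pointwise Bernstein coefficients identity -/
lemma bern_id (f : ℝ → ℝ) (h : ℝ) (n : ℕ) (x : ℝ) :
    ∑ k ∈ Finset.range (n + 1), (n.choose k : ℝ) * x ^ k * (1 - x) ^ (n - k) * f (k * h)
      = ∑ k ∈ Finset.range (n + 1), ((n.choose k : ℝ) * (fwdDiff h)^[k] f 0) * x ^ k := by
  let D : Module.End ℝ (ℝ → ℝ) :=
    { toFun := fwdDiff h, map_add' := fwdDiff_add h, map_smul' := fun r f => fwdDiff_const_smul h r f }
  have hD : ∀ (k : ℕ) (g : ℝ → ℝ), (D ^ k) g = (fwdDiff h)^[k] g := fun k g => by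
    rw [Module.End.pow_apply]; rfl
  have hE : ∀ (k : ℕ) (g : ℝ → ℝ) (y : ℝ), ((D + 1) ^ k) g y = g (y + k * h) := by
    intro k
    induction k with
    | zero => simp
    | succ k ih =>
      intro g y
      rw [pow_succ, Module.End.mul_apply, ih]
      have : ∀ z, (D + 1) g z = g (z + h) := fun z => by
        change g (z + h) - g z + g z = _
        ring
      rw [this]
      push_cast
      congr 1; ring
  have h1 : (x • (D + 1) + (1 - x) • (1 : Module.End ℝ (ℝ → ℝ))) = x • D + 1 := by
    module
  have c1 : Commute (x • (D + 1)) ((1 - x) • (1 : Module.End ℝ (ℝ → ℝ))) :=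
    (Commute.one_right _).smul_right _
  have c2 : Commute (x • D) (1 : Module.End ℝ (ℝ → ℝ)) := Commute.one_right _
  have t1 : ((x • (D + 1) + (1 - x) • (1 : Module.End ℝ (ℝ → ℝ))) ^ n) f 0 =
      ∑ k ∈ Finset.range (n + 1), (n.choose k : ℝ) * x ^ k * (1 - x) ^ (n - k) * f (k * h) := by
    rw [c1.add_pow, LinearMap.sum_apply, Finset.sum_apply]
    refine Finset.sum_congr rfl fun k _ => ?_
    rw [← nsmul_eq_mul', _root_.smul_pow, _root_.smul_pow, one_pow, smul_mul_smul_comm, mul_one,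
      LinearMap.smul_apply, LinearMap.smul_apply, Pi.smul_apply, Pi.smul_apply, hE]
    simp; ring
  have t2 : ((x • D + (1 : Module.End ℝ (ℝ → ℝ))) ^ n) f 0 =
      ∑ k ∈ Finset.range (n + 1), ((n.choose k : ℝ) * (fwdDiff h)^[k] f 0) * x ^ k := by
    rw [c2.add_pow, LinearMap.sum_apply, Finset.sum_apply]
    refine Finset.sum_congr rfl fun k _ => ?_
    rw [← nsmul_eq_mul', _root_.smul_pow, one_pow, mul_one,
      LinearMap.smul_apply, LinearMap.smul_apply, Pi.smul_apply, Pi.smul_apply, hD]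
    simp; ring
  rw [← t1, ← t2, h1]

/-- limit of nonnegative polynomials -/
lemma lim_ps (c : ℕ → ℕ → ℝ) (u : ℝ → ℝ) (C : ℝ) (hc : ∀ᶠ k in atTop, ∀ n, 0 ≤ c k n ∧ c k n ≤ C)
    (hlim : ∀ y, 0 ≤ y → y < 1 → Tendsto (fun k => ∑' n, c k n * y ^ n) atTop (𝓝 (u y))) :
    ∃ a : ℕ → ℝ, (∀ n, 0 ≤ a n) ∧ ∀ y, 0 ≤ y → y < 1 → HasSum (fun n => a n * y ^ n) (u y) := by
  let U : Ultrafilter ℕ := Ultrafilter.of atTop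
  have hU : (U : Filter ℕ) ≤ atTop := Ultrafilter.of_le atTop
  have hcU := hU hc
  have hex : ∀ n, ∃ a ∈ Set.Icc 0 C, Tendsto (fun k => c k n) U (𝓝 a) := by
    intro n
    have := (isCompact_Icc (a := (0:ℝ)) (b := C)).ultrafilter_le_nhds (U.map (fun k => c k n)) ?_
    · simpa [Tendsto] using this
    · simp only [le_principal_iff, Ultrafilter.mem_coe]
      refine Filter.mem_map.2 ?_
      filter_upwards [hcU] with k hk
      exact hk n
  choose a ha hta using hex
  refine ⟨a, fun n => (ha n).1, fun y hy hy1 => ?_⟩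
  have hsum : Summable (fun n => C * y ^ n) := (summable_geometric_of_lt_one hy hy1).mul_left C
  have h1 := tendsto_tsum_of_dominated_convergence (𝓕 := (U : Filter ℕ)) (f := fun k n => c k n * y ^ n)
    (g := fun n => a n * y ^ n) hsum (fun n => (hta n).mul_const _) (by
      filter_upwards [hcU] with k hk n
      rw [Real.norm_of_nonneg (mul_nonneg (hk n).1 (by positivity))]
      exact mul_le_mul_of_nonneg_right (hk n).2 (by positivity))
  have h2 := tendsto_nhds_unique h1 ((hlim y hy hy1).mono_left hU)
  rw [← h2]
  refine (Summable.of_nonneg_of_le (fun n => mul_nonneg (ha n).1 (by positivity)) (fun n => ?_) hsum).hasSum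
  exact mul_le_mul_of_nonneg_right (ha n).2 (by positivity)

lemma bernstein_ps (u : ℝ → ℝ) (hu : ContinuousOn u (Set.Icc 0 1))
    (hd : ∀ k : ℕ, 1 ≤ k → ∀ n ≤ k, 0 ≤ (fwdDiff (1 / (k : ℝ)))^[n] u 0) :
    ∃ a : ℕ → ℝ, (∀ n, 0 ≤ a n) ∧ ∀ y, 0 ≤ y → y < 1 → HasSum (fun n => a n * y ^ n) (u y) := by
  let f : C(unitInterval, ℝ) := ⟨fun x => u x, hu.comp_continuous continuous_subtype_val fun x => x.2⟩
  let c : ℕ → ℕ → ℝ := fun k n =>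
    if n ∈ Finset.range (k + 1) then (k.choose n : ℝ) * (fwdDiff (1 / (k : ℝ)))^[n] u 0 else 0
  have hB : ∀ k : ℕ, 1 ≤ k → ∀ x : unitInterval, bernsteinApproximation k f x
      = ∑ n ∈ Finset.range (k + 1), c k n * (x : ℝ) ^ n := by
    intro k hk x
    rw [bernsteinApproximation.apply]
    have e : ∑ n ∈ Finset.range (k + 1), c k n * (x : ℝ) ^ n = ∑ n ∈ Finset.range (k + 1),
      ((k.choose n : ℝ) * (fwdDiff (1 / (k : ℝ)))^[n] u 0) * (x : ℝ) ^ n :=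
      Finset.sum_congr rfl fun n hn => by simp only [c, if_pos hn]
    rw [e, ← bern_id, Finset.sum_range]
    refine Finset.sum_congr rfl fun i _ => ?_
    rw [bernstein_apply, smul_eq_mul]
    congr 1
    simp [f, bernstein.z, div_eq_mul_inv]
  have hts : ∀ k (y : ℝ), ∑' n, c k n * y ^ n = ∑ n ∈ Finset.range (k + 1), c k n * y ^ n := by
    intro k y
    refine tsum_eq_sum fun n hn => ?_
    simp only [c, if_neg hn, zero_mul]
  have h0 : ∀ k, 1 ≤ k → ∀ n, 0 ≤ c k n := by
    intro k hk n
    simp only [c]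
    split_ifs with h
    · exact mul_nonneg (by positivity) (hd k hk n (by simpa [Nat.lt_succ_iff] using h))
    · exact le_rfl
  refine lim_ps c u (u 1) ?_ ?_
  · filter_upwards [eventually_ge_atTop 1] with k hk n
    refine ⟨h0 k hk n, ?_⟩
    have h1 := hB k hk 1
    rw [bernsteinApproximation.apply_one (by omega)] at h1
    have h2 : u 1 = ∑ n ∈ Finset.range (k + 1), c k n := by simpa [f] using h1
    by_cases hn : n ∈ Finset.range (k + 1)
    · rw [h2]
      exact Finset.single_le_sum (f := c k) (fun i _ => h0 k hk i) hn
    · simp only [c, if_neg hn]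
      rw [h2]
      exact Finset.sum_nonneg fun i _ => h0 k hk i
  · intro y hy hy1
    have h1 := bernsteinApproximation_uniform f
    have h2 := ((ContinuousEvalConst.continuous_eval_const (F := C(unitInterval, ℝ)) (⟨y, hy, hy1.le⟩ : unitInterval)).tendsto f).comp h1
    refine h2.congr' ?_
    filter_upwards [eventually_ge_atTop 1] with k hk
    rw [hts]
    exact hB k hk _

end MT

namespace MT
open Polynomial Filter Topology Asymptotics

lemma hs_congr {ι : Type*} {f g : ι → ℝ} {a b : ℝ} (h : HasSum f a) (h1 : ∀ i, f i = g i)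
    (h2 : a = b) : HasSum g b := by
  rw [← h2]; convert h using 1; funext i; exact (h1 i).symm

lemma ps_analytic (c : ℕ → ℝ) (R : ℝ)
    (hs : ∀ x, 0 ≤ x → x < R → Summable (fun n => c n * x ^ n)) (x : ℝ) (hx : |x| < R) :
    AnalyticAt ℝ (fun x => ∑' n, c n * x ^ n) x := by
  let p := FormalMultilinearSeries.ofScalars ℝ c
  have hsum : p.sum = fun x => ∑' n, c n * x ^ n := by
    funext y
    simp [FormalMultilinearSeries.sum, p, FormalMultilinearSeries.ofScalars, smul_eq_mul]
  obtain ⟨r, hr1, hr2⟩ := exists_between hx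
  have hr0 : 0 < r := lt_of_le_of_lt (abs_nonneg _) hr1
  have hrad : (r.toNNReal : ENNReal) ≤ p.radius := by
    refine p.le_radius_of_summable ?_
    have := (hs r hr0.le hr2).abs
    refine this.congr fun n => ?_
    rw [Real.coe_toNNReal _ hr0.le]
    simp [p, FormalMultilinearSeries.ofScalars_norm, abs_mul, abs_of_pos hr0]
  have hpos : 0 < p.radius := lt_of_lt_of_le (by simpa using hr0) hrad
  have h := p.hasFPowerSeriesOnBall hpos
  rw [← hsum]
  refine h.analyticAt_of_mem ?_
  rw [Metric.mem_eball, edist_zero_right]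
  refine lt_of_lt_of_le ?_ hrad
  rw [← ofReal_norm, Real.norm_eq_abs]
  exact (ENNReal.ofReal_lt_ofReal_iff hr0).2 hr1

/-- one-dimensional hypothesis -/
def H1 (f : ℝ → ℝ) : Prop := Continuous f ∧ ∀ s, MS s → PB (Lf (fun k => f (s k)))

lemma Lf_expand (s : ℕ → ℝ) (n : ℕ) (ε : ℝ) :
    Lf s ((1 - X ^ 2) ^ n * (1 + C ε * X)) =
      ∑ i ∈ Finset.range (n + 1), (-1) ^ i * (n.choose i : ℝ) * (s (2 * i) + ε * s (2 * i + 1)) := by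
  have e : ((1 - X ^ 2) ^ n * (1 + C ε * X) : ℝ[X]) =
      ∑ i ∈ Finset.range (n + 1), ((-1) ^ i * (n.choose i : ℝ)) • (X ^ (2 * i) + ε • X ^ (2 * i + 1)) := by
    rw [sub_eq_neg_add, add_pow, Finset.sum_mul]
    refine Finset.sum_congr rfl fun i _ => ?_
    simp only [Polynomial.smul_eq_C_mul, one_pow, mul_one, map_mul, map_pow, map_neg, map_one,
      Polynomial.C_eq_natCast, map_natCast]
    rw [neg_pow, ← pow_mul]
    ring
  rw [e, map_sum]
  refine Finset.sum_congr rfl fun i _ => ?_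
  simp [Lf_X]; ring

lemma MS_exp (A a B r : ℝ) (ha : |a| ≤ A) (hB : 0 ≤ B) (hr : 1 / 2 ≤ r) (hr1 : r ≤ 1) :
    ∃ s, MS s ∧ ∀ i, s (2 * i) = A + 2 * (B * (r ^ 2) ^ i) ∧ s (2 * i + 1) = a + B * (r ^ 2) ^ i := by
  have h := abs_le.1 ha
  have hr0 : r ≠ 0 := by intro h; rw [h] at hr; norm_num at hr
  have hBr : B / r ≤ 2 * B := by
    rw [div_le_iff₀ (by linarith)]; nlinarith
  have hBr0 : 0 ≤ B / r := div_nonneg hB (by linarith)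
  have habs : |r| ≤ 1 := abs_le.2 ⟨by linarith, hr1⟩
  refine ⟨_, (((MS.smul ((A + a) / 2) (by linarith) (MS.pow 1 (by simp))).add
    (MS.smul ((A - a) / 2) (by linarith) (MS.pow (-1) (by simp)))).add
    (MS.smul ((2 * B + B / r) / 2) (by linarith) (MS.pow r habs))).add
    (MS.smul ((2 * B - B / r) / 2) (by linarith) (MS.pow (-r) (by simpa using habs))), fun i => ⟨?_, ?_⟩⟩
  · simp only [pow_mul, one_pow, neg_sq]; ring
  · simp only [pow_succ _ (2 * i), pow_mul, one_pow, neg_sq]; field_simp; ring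

lemma H1.fwd {f : ℝ → ℝ} (h : H1 f) (a : ℝ) (ε : ℝ) (hε : ε = 1 ∨ ε = -1) (k : ℕ) (hk : 1 ≤ k) (n : ℕ)
    (hn : n ≤ k) : 0 ≤ (fwdDiff (1 / (k : ℝ)))^[n]
      (fun x => f (|a| + 2 * Real.exp (x - 1 / 2)) + ε * f (a + Real.exp (x - 1 / 2))) 0 := by
  have hk0 : (0:ℝ) < k := by exact_mod_cast hk
  have hk1 : (1:ℝ) ≤ k := by exact_mod_cast hk
  have hr : 1 / 2 ≤ Real.exp (-1 / (2 * k)) := by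
    have := Real.add_one_le_exp (-1 / (2 * k) : ℝ)
    have h2 : 1 / (2 * (k:ℝ)) ≤ 1 / 2 := by
      rw [div_le_div_iff₀ (by positivity) (by norm_num)]; linarith
    have h3 : -1 / (2 * (k:ℝ)) = - (1 / (2 * k)) := by ring
    linarith
  have hr1 : Real.exp (-1 / (2 * k)) ≤ 1 := by
    rw [Real.exp_le_one_iff]; exact div_nonpos_of_nonpos_of_nonneg (by norm_num) (by positivity)
  obtain ⟨s, hs, hsi⟩ := MS_exp |a| a (Real.exp (n / k - 1 / 2)) _ le_rfl (Real.exp_pos _).le hr hr1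
  have := (h.2 s hs).main n ε hε
  rw [Lf_expand, ← Finset.sum_range_reflect] at this
  rw [fwdDiff_iter_eq_sum_shift]
  refine this.trans_eq (Finset.sum_congr rfl fun i hi => ?_)
  have hi' : i ≤ n := by simpa [Nat.lt_succ_iff] using hi
  have e1 : n + 1 - 1 - i = n - i := by omega
  have e2 : Real.exp (n / k - 1 / 2) * (Real.exp (-1 / (2 * k)) ^ 2) ^ (n - i) =
      Real.exp (0 + i • (1 / (k:ℝ)) - 1 / 2) := by
    rw [← pow_mul, ← Real.exp_nat_mul, ← Real.exp_add]
    congr 1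
    push_cast [Nat.cast_sub hi']
    simp only [nsmul_eq_mul]
    field_simp
    ring
  rw [e1, Nat.choose_symm hi', (hsi _).1, (hsi _).2, e2]
  simp [zsmul_eq_mul]; ring

lemma H1.analytic {f : ℝ → ℝ} (h : H1 f) (y0 : ℝ) : AnalyticAt ℝ f y0 := by
  set a := y0 - 1 with ha
  have hcont : ∀ ε : ℝ, ContinuousOn (fun x => f (|a| + 2 * Real.exp (x - 1 / 2)) + ε * f (a + Real.exp (x - 1 / 2))) (Set.Icc 0 1) := by
    intro ε
    have := h.1
    exact Continuous.continuousOn (by fun_prop)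
  obtain ⟨c, hc0, hc⟩ := bernstein_ps _ (hcont 1) (h.fwd a 1 (Or.inl rfl))
  obtain ⟨d, hd0, hd⟩ := bernstein_ps _ (hcont (-1)) (h.fwd a (-1) (Or.inr rfl))
  have hcd : ∀ y, 0 ≤ y → y < 1 → HasSum (fun n => ((c n - d n) / 2) * y ^ n) (f (a + Real.exp (y - 1 / 2))) := by
    intro y hy hy1
    exact hs_congr (((hc y hy hy1).sub (hd y hy hy1)).mul_right (1 / 2)) (fun n => by ring) (by ring)
  have h1 := ps_analytic (fun n => (c n - d n) / 2) 1 (fun x hx hx1 => (hcd x hx hx1).summable) (1 / 2)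
    (by rw [abs_of_pos] <;> norm_num)
  have h2 : AnalyticAt ℝ (fun y => 1 / 2 + Real.log (1 + y - y0)) y0 := by
    refine analyticAt_const.add (AnalyticAt.log ?_ ?_)
    · fun_prop
    · norm_num
  have h3 := AnalyticAt.fun_comp (f := fun y => 1 / 2 + Real.log (1 + y - y0)) (x := y0) (by simpa using h1) h2
  refine h3.congr ?_
  have hc2 : ContinuousAt (fun y => 1 / 2 + Real.log (1 + y - y0)) y0 := h2.continuousAt
  have hm : ∀ᶠ y in 𝓝 y0, 1 / 2 + Real.log (1 + y - y0) ∈ Set.Ioo (0:ℝ) 1 := by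
    refine hc2 (Ioo_mem_nhds ?_ ?_) <;> norm_num
  filter_upwards [hm, Ioi_mem_nhds (show y0 - 1 < y0 by linarith)] with y hy hy1
  rw [(hcd _ hy.1.le hy.2).tsum_eq]
  congr 1
  have : 0 < 1 + y - y0 := by have := Set.mem_Ioi.1 hy1; linarith
  rw [add_sub_cancel_left, Real.exp_log this]; ring

end MT

namespace MT
open Polynomial Filter Topology Asymptotics

lemma lead_nonneg {g : ℝ → ℝ} {v : ℕ → ℝ} (h : AE g v) (hg : ∀ᶠ y in 𝓝[>] 0, 0 ≤ g y) (n : ℕ)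
    (hv : ∀ i < n, v i = 0) : 0 ≤ v n := by
  obtain ⟨C, hC⟩ := (h (n + 1)).bound
  have h1 : ∀ᶠ y in 𝓝[>] (0:ℝ), 0 ≤ v n + C * y := by
    filter_upwards [hC, hg, pos_ev] with y h1 h2 h3
    rw [Finset.sum_range_succ, Finset.sum_eq_zero (fun i hi => by rw [hv i (Finset.mem_range.1 hi), zero_mul]),
      zero_add, Real.norm_eq_abs, Real.norm_of_nonneg (by positivity), pow_succ] at h1
    have h4 := (le_abs_self _).trans h1
    have h5 : 0 ≤ (v n + C * y) * y ^ n := by linarith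
    exact nonneg_of_mul_nonneg_left h5 (by positivity)
  have h2 : Tendsto (fun y : ℝ => v n + C * y) (𝓝[>] 0) (𝓝 (v n)) := by
    have : Continuous (fun y : ℝ => v n + C * y) := by fun_prop
    simpa using (this.tendsto 0).mono_left (nhdsWithin_le_nhds (s := Set.Ioi 0))
  exact ge_of_tendsto h2 h1

lemma H1.deriv_nonneg {f : ℝ → ℝ} (h : H1 f) (n : ℕ) (a : ℝ) (ha : 0 ≤ a) : 0 ≤ iteratedDeriv n f a := by
  have h1 := hasFPowerSeriesAt_iff.1 (h.analytic a).hasFPowerSeriesAt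
  simp only [FormalMultilinearSeries.coeff_ofScalars, smul_eq_mul] at h1
  set p : ℕ → ℝ := fun n => iteratedDeriv n f a / (n.factorial : ℝ) with hp
  obtain ⟨δ, hδ, hb⟩ := Metric.eventually_nhds_iff.1 h1
  have key : ∀ (P : ℝ[X]) (b : ℝ), 0 < b → b < δ →
      HasSum (fun i => p i * P.eval ((1/2) ^ i) * b ^ i) (Lf (fun k => f (a + b * (1/2) ^ k)) P) := by
    intro P b hb0 hb1
    induction P using Polynomial.induction_on' with
    | add P Q hP hQ =>
      rw [map_add]
      exact hs_congr (hP.add hQ) (fun i => by rw [eval_add]; ring) rfl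
    | monomial k c =>
      rw [Lf_mono]
      have h2 := hb (y := b * (1/2) ^ k) (by
        rw [dist_zero_right, Real.norm_of_nonneg (by positivity)]
        exact lt_of_le_of_lt (mul_le_of_le_one_right hb0.le (pow_le_one₀ (by norm_num) (by norm_num))) hb1)
      refine hs_congr (h2.mul_right c) (fun i => ?_) rfl
      rw [eval_monomial, mul_pow, ← pow_mul, ← pow_mul, mul_comm i k]
      ring
  let q : ℝ[X] := ∏ i ∈ Finset.range n, (X - C ((1/2) ^ i))
  have hq0 : ∀ i < n, q.eval ((1/2) ^ i) = 0 := by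
    intro i hi
    rw [eval_prod]
    exact Finset.prod_eq_zero (Finset.mem_range.2 hi) (by simp)
  have hqn : q.eval ((1/2) ^ n) ≠ 0 := by
    rw [eval_prod]
    refine Finset.prod_ne_zero_iff.2 fun i hi => ?_
    rw [eval_sub, eval_X, eval_C, sub_ne_zero]
    exact (pow_lt_pow_right_of_lt_one₀ (by norm_num) (by norm_num) (Finset.mem_range.1 hi)).ne
  have h3 := AE_of_hasSum hδ (key (q * q))
  have h4 := lead_nonneg h3 ?_ n ?_
  · rw [eval_mul] at h4
    have h5 : 0 ≤ p n := nonneg_of_mul_nonneg_left h4 (mul_self_pos.2 hqn)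
    simp only [hp] at h5
    have h6 : (0:ℝ) < n.factorial := by positivity
    by_contra hneg
    exact absurd (div_neg_of_neg_of_pos (not_le.1 hneg) h6) (not_lt.2 h5)
  · filter_upwards [pos_ev] with b hb
    exact (h.2 _ ((MS.const a ha).add (MS.smul b hb.le (MS.pow (1/2) (by rw [abs_of_pos] <;> norm_num))))).1 q
  · intro i hi
    rw [eval_mul, hq0 i hi]; ring

lemma taylor_lb {f : ℝ → ℝ} (hf : AnalyticOnNhd ℝ f Set.univ) (hd : ∀ n a, 0 ≤ a → 0 ≤ iteratedDeriv n f a)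
    (N : ℕ) (y : ℝ) (hy : 0 ≤ y) :
    ∑ n ∈ Finset.range N, iteratedDeriv n f 0 / (n.factorial : ℝ) * y ^ n ≤ f y := by
  induction N generalizing f y with
  | zero => simpa using hd 0 y hy
  | succ N ih =>
    have ih' := fun z hz => ih (f := deriv f) (fun x _ => (hf x trivial).deriv) (fun n a ha => by
      rw [← iteratedDeriv_succ']; exact hd _ _ ha) z hz
    simp only [← iteratedDeriv_succ'] at ih'
    let g : ℝ → ℝ := fun z => f z - ∑ n ∈ Finset.range (N + 1), iteratedDeriv n f 0 / (n.factorial : ℝ) * z ^ n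
    have hder : ∀ z, HasDerivAt g (deriv f z - ∑ n ∈ Finset.range N, iteratedDeriv (n + 1) f 0 / (n.factorial : ℝ) * z ^ n) z := by
      intro z
      refine (hf z trivial).differentiableAt.hasDerivAt.sub ?_
      have : HasDerivAt (fun z => ∑ n ∈ Finset.range (N + 1), iteratedDeriv n f 0 / (n.factorial : ℝ) * z ^ n)
          (∑ n ∈ Finset.range (N + 1), iteratedDeriv n f 0 / (n.factorial : ℝ) * (n * z ^ (n - 1))) z :=
        HasDerivAt.fun_sum fun n _ => (hasDerivAt_pow n z).const_mul _
      refine this.congr_deriv ?_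
      rw [Finset.sum_range_succ']
      simp only [Nat.cast_zero, zero_mul, mul_zero, add_zero]
      refine Finset.sum_congr rfl fun n _ => ?_
      rw [Nat.factorial_succ]
      have : (n.factorial : ℝ) ≠ 0 := by positivity
      push_cast
      field_simp
    have hmono : MonotoneOn g (Set.Ici 0) := by
      refine monotoneOn_of_deriv_nonneg (convex_Ici 0) (fun z _ => (hder z).continuousAt.continuousWithinAt)
        (fun z _ => (hder z).differentiableAt.differentiableWithinAt) ?_
      intro z hz
      rw [interior_Ici] at hz
      rw [(hder z).deriv]
      exact sub_nonneg.2 (ih' z (le_of_lt hz))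
    have h0 : g 0 = 0 := by
      simp only [g]
      rw [Finset.sum_range_succ']
      simp
    have := hmono (Set.mem_Ici.2 le_rfl) (Set.mem_Ici.2 hy) hy
    rw [h0] at this
    simpa [g] using this

/-- one-dimensional theorem -/
theorem H1.main {f : ℝ → ℝ} (h : H1 f) :
    ∃ c : ℕ → ℝ, (∀ n, 0 ≤ c n) ∧ ∀ y, HasSum (fun n => c n * y ^ n) (f y) := by
  have hf : AnalyticOnNhd ℝ f Set.univ := fun x _ => h.analytic x
  set c : ℕ → ℝ := fun n => iteratedDeriv n f 0 / (n.factorial : ℝ) with hcdef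
  have hc : ∀ n, 0 ≤ c n := fun n => div_nonneg (h.deriv_nonneg n 0 le_rfl) (by positivity)
  have hs : ∀ x, 0 ≤ x → Summable (fun n => c n * x ^ n) := fun x hx =>
    summable_of_sum_range_le (fun n => mul_nonneg (hc n) (by positivity))
      (fun N => taylor_lb hf h.deriv_nonneg N x hx)
  have hs' : ∀ x, Summable (fun n => c n * x ^ n) := fun x => by
    refine Summable.of_norm ((hs |x| (abs_nonneg _)).congr fun n => ?_)
    rw [norm_mul, norm_pow, Real.norm_of_nonneg (hc n), Real.norm_eq_abs]
  have hg : AnalyticOnNhd ℝ (fun x => ∑' n, c n * x ^ n) Set.univ := fun x _ =>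
    ps_analytic c (|x| + 1) (fun y hy _ => hs y hy) x (by linarith)
  have h1 := hasFPowerSeriesAt_iff.1 (h.analytic 0).hasFPowerSeriesAt
  simp only [FormalMultilinearSeries.coeff_ofScalars, smul_eq_mul, zero_add] at h1
  have h2 : f =ᶠ[𝓝 0] (fun x => ∑' n, c n * x ^ n) := by
    filter_upwards [h1] with z hz
    rw [← hz.tsum_eq]
    exact tsum_congr fun n => mul_comm _ _
  have h3 := hf.eq_of_eventuallyEq hg h2
  refine ⟨c, hc, fun y => ?_⟩
  rw [h3]
  exact (hs' y).hasSum

end MT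

namespace MT
open Polynomial Filter Topology Asymptotics

lemma pow_bigO {a b : ℕ} (h : a ≤ b) : (fun y : ℝ => y ^ b) =O[𝓝[>] 0] (fun y => y ^ a) := by
  refine IsBigO.of_bound 1 ?_
  filter_upwards [pos_ev, lt_ev one_pos] with y h1 h2
  rw [Real.norm_of_nonneg (by positivity), Real.norm_of_nonneg (by positivity), one_mul]
  exact pow_le_pow_of_le_one h1.le h2.le h

lemma bdd_bigO (g : ℝ → ℝ) (hg : Continuous g) (d : ℕ) : (fun y : ℝ => g y * y ^ d) =O[𝓝[>] 0] (fun y => y ^ d) := by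
  have : g =O[𝓝[>] 0] (fun _ => (1:ℝ)) :=
    ((hg.tendsto 0).mono_left (nhdsWithin_le_nhds (s := Set.Ioi 0))).isBigO_one ℝ
  simpa using this.mul (isBigO_refl (fun y : ℝ => y ^ d) _)

/-- polynomial approximation to order `J` -/
def EX (J : ℕ) (f : ℝ → ℝ) : Prop :=
  ∃ P : ℝ[X], (fun y => f y - P.eval y) =O[𝓝[>] 0] (fun y => y ^ J)

lemma trunc (P : ℝ[X]) (J : ℕ) :
    (fun y => P.eval y - ∑ i ∈ Finset.range J, P.coeff i * y ^ i) =O[𝓝[>] 0] (fun y => y ^ J) := by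
  induction P using Polynomial.induction_on' with
  | add P Q hP hQ =>
    refine (hP.add hQ).congr_left fun y => ?_
    simp only [eval_add, coeff_add, add_mul, Finset.sum_add_distrib]; ring
  | monomial k c =>
    by_cases h : k < J
    · refine (isBigO_zero _ _).congr_left fun y => ?_
      simp [coeff_monomial, h]
    · have : (fun y : ℝ => c * y ^ k) =O[𝓝[>] 0] (fun y => y ^ J) := (pow_bigO (not_lt.1 h)).const_mul_left c
      refine this.congr_left fun y => ?_
      rw [Finset.sum_eq_zero, eval_monomial, sub_zero]
      intro i hi
      rw [coeff_monomial, if_neg, zero_mul]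
      have := Finset.mem_range.1 hi
      omega

lemma trunc' {f : ℝ → ℝ} {P : ℝ[X]} {J : ℕ} (h : (fun y => f y - P.eval y) =O[𝓝[>] 0] (fun y => y ^ J)) :
    (fun y => f y - ∑ i ∈ Finset.range J, P.coeff i * y ^ i) =O[𝓝[>] 0] (fun y => y ^ J) :=
  (h.add (trunc P J)).congr_left fun y => by ring

lemma AE.ex {f : ℝ → ℝ} {a : ℕ → ℝ} (h : AE f a) (J : ℕ) : 
    (fun y => f y - (∑ i ∈ Finset.range J, C (a i) * X ^ i : ℝ[X]).eval y) =O[𝓝[>] 0] (fun y => y ^ J) := by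
  refine (h J).congr_left fun y => ?_
  simp [eval_finsetSum]

lemma AE_of_EX {f : ℝ → ℝ} (h : ∀ J, EX J f) : ∃ a, AE f a := by
  choose P hP using h
  refine ⟨fun i => (P (i + 1)).coeff i, fun J => ?_⟩
  have h1 := trunc' (hP J)
  refine h1.congr_left fun y => ?_
  congr 1
  refine Finset.sum_congr rfl fun i hi => ?_
  congr 1
  have hi' := Finset.mem_range.1 hi
  exact AE_uniq' (trunc' ((hP J).trans (pow_bigO (show i + 1 ≤ J by omega)))) (trunc' (hP (i + 1))) i (by omega)

lemma EX_div {g : ℝ → ℝ} {d N : ℕ} (h : EX (d + N) (fun y => y ^ d * g y))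
    (hb : g =O[𝓝[>] 0] (fun _ => (1 : ℝ))) : EX N g := by
  obtain ⟨P, hP⟩ := h
  have h1 : (fun y => y ^ d * g y) =O[𝓝[>] 0] (fun y => y ^ d) := by
    simpa using (isBigO_refl (fun y : ℝ => y ^ d) _).mul hb
  have h2 : (fun y => P.eval y) =O[𝓝[>] 0] (fun y => y ^ d) :=
    (h1.sub (hP.trans (pow_bigO (Nat.le_add_right _ _)))).congr_left fun y => by ring
  have h3 := AE_uniq_aux d (fun i => P.coeff i) ((h2.sub (trunc P d)).congr_left fun y => by ring)
  obtain ⟨Q, hQ⟩ := Polynomial.X_pow_dvd_iff.2 h3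
  refine ⟨Q, ?_⟩
  obtain ⟨K, hK⟩ := hP.bound
  refine IsBigO.of_bound K ?_
  filter_upwards [hK, pos_ev] with y hy h0
  rw [hQ, eval_mul, eval_pow, eval_X, ← mul_sub, norm_mul, pow_add, norm_mul] at hy
  have : 0 < ‖y ^ d‖ := norm_pos_iff.2 (pow_pos h0 d).ne.symm
  refine le_of_mul_le_mul_left ?_ this
  linarith

lemma PS.nonneg {f : ℝ → ℝ} (h : PS f) {y : ℝ} (hy : 0 ≤ y) : 0 ≤ f y := by
  obtain ⟨c, hc, hs⟩ := h
  exact (hs y hy).nonneg fun n => mul_nonneg (hc n) (by positivity)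

lemma PS.mono {f : ℝ → ℝ} (h : PS f) {x y : ℝ} (hx : 0 ≤ x) (hy : x ≤ y) : f x ≤ f y := by
  obtain ⟨c, hc, hs⟩ := h
  refine hasSum_le (fun n => ?_) (hs x hx) (hs y (hx.trans hy))
  exact mul_le_mul_of_nonneg_left (by gcongr) (hc n)

lemma lead_poly (n : ℕ) (b : ℕ → ℝ) (h : ∀ θ : ℝ, 0 ≤ θ → 0 ≤ ∑ i ∈ Finset.range (n + 1), b i * θ ^ i) :
    0 ≤ b n := by
  have hc : Continuous (fun y : ℝ => ∑ i ∈ Finset.range (n + 1), b i * y ^ (n - i)) := by fun_prop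
  have h1 := (hc.tendsto 0).mono_left (nhdsWithin_le_nhds (s := Set.Ioi 0))
  have h2 : ∑ i ∈ Finset.range (n + 1), b i * (0:ℝ) ^ (n - i) = b n := by
    rw [Finset.sum_range_succ, Finset.sum_eq_zero]
    · simp
    · intro i hi
      have := Finset.mem_range.1 hi
      rw [zero_pow (by omega), mul_zero]
  rw [h2] at h1
  refine ge_of_tendsto h1 ?_
  filter_upwards [pos_ev] with y hy
  have h3 := mul_nonneg (h y⁻¹ (by positivity)) (pow_nonneg hy.le n)
  rw [Finset.sum_mul] at h3
  refine h3.trans_eq (Finset.sum_congr rfl fun i hi => ?_)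
  have hi' := Nat.lt_succ_iff.1 (Finset.mem_range.1 hi)
  rw [mul_assoc, inv_pow, ← pow_sub_mul_pow y hi']
  field_simp

lemma hasSum_antidiag {g : ℕ × ℕ → ℝ} (hg : ∀ p, 0 ≤ g p) {S : ℝ}
    (h : HasSum (fun k => ∑ p ∈ Finset.HasAntidiagonal.antidiagonal k, g p) S) : HasSum g S := by
  rw [← Finset.HasAntidiagonal.sigmaAntidiagonalEquivProd.hasSum_iff]
  have hs : Summable (g ∘ (Finset.HasAntidiagonal.sigmaAntidiagonalEquivProd (A := ℕ))) := by
    refine (summable_sigma_of_nonneg fun x => hg _).2 ⟨fun k => (hasSum_fintype _).summable, ?_⟩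
    refine h.summable.congr fun k => ?_
    rw [tsum_fintype, Finset.sum_coe_sort_eq_attach, ← Finset.sum_attach]
    rfl
  have h2 := hs.hasSum.sigma (fun k => hasSum_fintype _)
  have h3 : HasSum (fun k => ∑ p ∈ Finset.HasAntidiagonal.antidiagonal k, g p) (∑' x, (g ∘ (Finset.HasAntidiagonal.sigmaAntidiagonalEquivProd (A := ℕ))) x) := by
    refine hs_congr h2 (fun k => ?_) rfl
    rw [Finset.sum_coe_sort_eq_attach, ← Finset.sum_attach _ (fun p => g p)]
    rfl
  rw [h.unique h3]
  exact hs.hasSum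

end MT

namespace MT
open Polynomial Filter Topology Asymptotics

section
variable {Φ : ℝ → ℝ → ℝ} {c : ℝ → ℕ → ℝ} (hc0 : ∀ y, 0 ≤ y → ∀ n, 0 ≤ c y n)
  (hcs : ∀ y, 0 ≤ y → ∀ t, 0 ≤ t → HasSum (fun n => c y n * t ^ n) (Φ y t))
  (h2 : ∀ (θ : ℝ) (N : ℕ), 0 ≤ θ → PS (fun y => Φ y (θ * y ^ N)))
include hc0 hcs h2

lemma tail_bd (y s : ℝ) (hy : 0 ≤ y) (hy1 : y ≤ 1) (hs : 0 ≤ s) (hs1 : s ≤ 1) (n : ℕ) :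
    |Φ y s - ∑ i ∈ Finset.range n, c y i * s ^ i| ≤ Φ 1 1 * s ^ n := by
  have h := hcs y hy s hs
  have h1 := hcs y hy 1 zero_le_one
  have hm : Φ y 1 ≤ Φ 1 1 := by simpa using (h2 1 0 zero_le_one).mono hy hy1
  have ht : HasSum (fun i => c y (i + n) * s ^ (i + n)) (Φ y s - ∑ i ∈ Finset.range n, c y i * s ^ i) :=
    (hasSum_nat_add_iff' n).2 h
  have ht1 : HasSum (fun i => c y (i + n) * 1 ^ (i + n)) (Φ y 1 - ∑ i ∈ Finset.range n, c y i * 1 ^ i) :=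
    (hasSum_nat_add_iff' n).2 h1
  rw [abs_of_nonneg (ht.nonneg fun i => mul_nonneg (hc0 y hy _) (by positivity))]
  have h3 : Φ y s - ∑ i ∈ Finset.range n, c y i * s ^ i ≤
      (Φ y 1 - ∑ i ∈ Finset.range n, c y i * 1 ^ i) * s ^ n := by
    refine hasSum_le (fun i => ?_) ht (ht1.mul_right (s ^ n))
    rw [one_pow, mul_one, pow_add]
    refine mul_le_mul_of_nonneg_left ?_ (hc0 y hy _)
    exact mul_le_of_le_one_left (by positivity) (pow_le_one₀ hs hs1)
  refine h3.trans (mul_le_mul_of_nonneg_right ?_ (by positivity))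
  have : 0 ≤ ∑ i ∈ Finset.range n, c y i * 1 ^ i :=
    Finset.sum_nonneg fun i _ => mul_nonneg (hc0 y hy _) (by positivity)
  linarith

lemma c_bdd (n : ℕ) : (fun y => c y n) =O[𝓝[>] 0] (fun _ => (1:ℝ)) := by
  refine IsBigO.of_bound (Φ 1 1) ?_
  filter_upwards [pos_ev, lt_ev one_pos] with y hy hy1
  rw [norm_one, mul_one, Real.norm_of_nonneg (hc0 y hy.le n)]
  have h1 := hcs y hy.le 1 zero_le_one
  have hm : Φ y 1 ≤ Φ 1 1 := by simpa using (h2 1 0 zero_le_one).mono hy.le hy1.le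
  refine le_trans ?_ hm
  have := le_hasSum h1 n (fun i _ => mul_nonneg (hc0 y hy.le _) (by positivity))
  simpa using this

lemma tail_O (θ : ℝ) (hθ : 0 ≤ θ) (N : ℕ) (hN : 1 ≤ N) (n : ℕ) :
    (fun y => Φ y (θ * y ^ N) - ∑ i ∈ Finset.range n, c y i * (θ * y ^ N) ^ i) =O[𝓝[>] 0]
      (fun y => y ^ (n * N)) := by
  refine IsBigO.of_bound (Φ 1 1 * θ ^ n) ?_
  have hsm : ∀ᶠ y in 𝓝[>] (0:ℝ), θ * y ^ N < 1 := by
    have hcont : Continuous (fun y : ℝ => θ * y ^ N) := by fun_prop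
    have := (hcont.tendsto 0).mono_left (nhdsWithin_le_nhds (s := Set.Ioi 0))
    rw [zero_pow (by omega), mul_zero] at this
    exact this.eventually (gt_mem_nhds one_pos)
  filter_upwards [pos_ev, lt_ev one_pos, hsm] with y hy hy1 h3
  have := tail_bd hc0 hcs h2 y (θ * y ^ N) hy.le hy1.le (by positivity) h3.le n
  rw [Real.norm_eq_abs, Real.norm_of_nonneg (by positivity)]
  refine this.trans_eq ?_
  rw [mul_pow, ← pow_mul, mul_comm N n]; ring

lemma c_AE (n : ℕ) : ∃ γ, AE (fun y => c y n) γ := by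
  induction n using Nat.strong_induction_on with
  | _ n ih =>
    refine AE_of_EX fun J => ?_
    -- use `N = J + 1`
    suffices EX (J + 1) (fun y => c y n) by
      obtain ⟨P, hP⟩ := this
      exact ⟨P, hP.trans (pow_bigO (Nat.le_succ _))⟩
    refine EX_div (d := n * (J + 1)) ?_ (c_bdd hc0 hcs h2 n)
    have h3 := tail_O hc0 hcs h2 1 zero_le_one (J + 1) (by omega) (n + 1)
    obtain ⟨e, he0, he⟩ := h2 1 (J + 1) zero_le_one
    have hAE : AE (fun y => Φ y (1 * y ^ (J + 1))) e := AE_of_hasSum one_pos (fun y hy _ => he y hy.le)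
    have hex := hAE.ex (n * (J + 1) + (J + 1))
    have ihs : ∀ i, ∃ Q : ℝ[X], i < n → (fun y => c y i - Q.eval y) =O[𝓝[>] 0] (fun y => y ^ (n * (J + 1) + (J + 1))) := by
      intro i
      by_cases hi : i < n
      · obtain ⟨γ, hγ⟩ := ih i hi
        exact ⟨_, fun _ => hγ.ex _⟩
      · exact ⟨0, fun h => absurd h hi⟩
    choose Q hQ using ihs
    refine ⟨(∑ i ∈ Finset.range (n * (J + 1) + (J + 1)), C (e i) * X ^ i : ℝ[X]) -
      ∑ i ∈ Finset.range n, Q i * X ^ ((J + 1) * i), ?_⟩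
    have h5 : (fun y => ∑ i ∈ Finset.range n, (c y i - (Q i).eval y) * y ^ ((J + 1) * i)) =O[𝓝[>] 0]
        (fun y => y ^ (n * (J + 1) + (J + 1))) := by
      refine IsBigO.fun_sum (A := fun (i : ℕ) (y : ℝ) => _) fun i hi => ?_
      have h6 : (fun y : ℝ => y ^ ((J + 1) * i)) =O[𝓝[>] 0] (fun y => y ^ 0) := pow_bigO (Nat.zero_le _)
      simpa using (hQ i (Finset.mem_range.1 hi)).mul h6
    rw [show (n + 1) * (J + 1) = n * (J + 1) + (J + 1) by ring] at h3
    refine ((hex.sub h3).sub h5).congr_left fun y => ?_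
    rw [Finset.sum_range_succ, eval_sub]
    simp only [sub_mul, Finset.sum_sub_distrib, eval_finsetSum, eval_mul, eval_pow, eval_X, one_mul,
      ← pow_mul, mul_comm n (J + 1)]
    ring

lemma coeff_formula (γ : ℕ → ℕ → ℝ) (hγ : ∀ n, AE (fun y => c y n) (γ n)) (θ : ℝ) (hθ : 0 ≤ θ)
    (N : ℕ) (hN : 1 ≤ N) (e : ℕ → ℝ) (he : AE (fun y => Φ y (θ * y ^ N)) e) (n k : ℕ) (hk : k < n * N) :
    e k = ∑ i ∈ Finset.range n, (if N * i ≤ k then γ i (k - N * i) else 0) * θ ^ i := by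
  let P : ℝ[X] := ∑ i ∈ Finset.range n, C (θ ^ i) * (X ^ (N * i) * ∑ j ∈ Finset.range (n * N), C (γ i j) * X ^ j)
  have h1 : (fun y => Φ y (θ * y ^ N) - P.eval y) =O[𝓝[>] 0] (fun y => y ^ (n * N)) := by
    have h3 := tail_O hc0 hcs h2 θ hθ N hN n
    have h5 : (fun y => ∑ i ∈ Finset.range n, (c y i - (∑ j ∈ Finset.range (n * N), C (γ i j) * X ^ j : ℝ[X]).eval y) * (θ ^ i * y ^ (N * i)))
        =O[𝓝[>] 0] (fun y => y ^ (n * N)) := by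
      refine IsBigO.fun_sum (A := fun (i : ℕ) (y : ℝ) => _) fun i hi => ?_
      have h6 : (fun y : ℝ => θ ^ i * y ^ (N * i)) =O[𝓝[>] 0] (fun y => y ^ 0) :=
        (pow_bigO (Nat.zero_le _)).const_mul_left _
      simpa using ((hγ i).ex (n * N)).mul h6
    refine (h3.add h5).congr_left fun y => ?_
    simp only [P, sub_mul, Finset.sum_sub_distrib, eval_finsetSum, eval_mul, eval_pow, eval_X, eval_C,
      mul_pow, ← pow_mul]
    rw [sub_add_sub_cancel]
    congr 1
    refine Finset.sum_congr rfl fun i _ => ?_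
    ring
  have h4 := AE_uniq' (he (n * N)) (trunc' h1) k hk
  rw [h4]
  simp only [P, finsetSum_coeff, coeff_C_mul, coeff_X_pow_mul']
  refine Finset.sum_congr rfl fun i _ => ?_
  rw [mul_comm]
  congr 1
  split_ifs with h
  · simp only [finsetSum_coeff, coeff_C_mul, coeff_X_pow]
    simp
    intro h'; omega
  · rfl

lemma two_d : ∃ γ : ℕ → ℕ → ℝ, (∀ n j, 0 ≤ γ n j) ∧ ∀ y t, 0 ≤ y → 0 ≤ t →
    HasSum (fun p : ℕ × ℕ => γ p.1 p.2 * t ^ p.1 * y ^ p.2) (Φ y t) := by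
  choose γ hγ using c_AE hc0 hcs h2
  have hγ0 : ∀ n j, 0 ≤ γ n j := by
    intro n j
    have key := lead_poly n (fun i => if (j + 1) * i ≤ n * (j + 1) + j then γ i (n * (j + 1) + j - (j + 1) * i) else 0) ?_
    · have e1 : (j + 1) * n ≤ n * (j + 1) + j := by nlinarith
      have e2 : n * (j + 1) + j - (j + 1) * n = j := by rw [mul_comm n]; omega
      simp only [if_pos e1, e2] at key
      exact key
    · intro θ hθ
      obtain ⟨e, he0, he⟩ := h2 θ (j + 1) hθ
      rw [← coeff_formula hc0 hcs h2 γ hγ θ hθ (j + 1) (by omega) e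
        (AE_of_hasSum one_pos (fun y hy _ => he y hy.le)) (n + 1) _ (by rw [add_mul]; omega)]
      exact he0 _
  have hpos : ∀ y t, 0 < y → 0 ≤ t → HasSum (fun p : ℕ × ℕ => γ p.1 p.2 * t ^ p.1 * y ^ p.2) (Φ y t) := by
    intro y t hy ht
    refine hasSum_antidiag (fun p => mul_nonneg (mul_nonneg (hγ0 _ _) (by positivity)) (by positivity)) ?_
    obtain ⟨e, he0, he⟩ := h2 (t / y) 1 (by positivity)
    have h3 := he y hy.le
    simp only [pow_one] at h3
    refine hs_congr h3 (fun k => ?_) (by congr 1; field_simp)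
    rw [coeff_formula hc0 hcs h2 γ hγ (t / y) (by positivity) 1 le_rfl e
        (AE_of_hasSum one_pos (fun y hy _ => he y hy.le)) (k + 1) k (by omega),
      Finset.Nat.sum_antidiagonal_eq_sum_range_succ_mk, Finset.sum_mul]
    refine Finset.sum_congr rfl fun i hi => ?_
    have hi' := Nat.lt_succ_iff.1 (Finset.mem_range.1 hi)
    rw [one_mul, if_pos hi', div_pow, ← pow_sub_mul_pow y hi']
    field_simp
  refine ⟨γ, hγ0, fun y t hy ht => ?_⟩
  rcases hy.eq_or_lt with rfl | hy
  · -- expansions in `y` for fixed `t`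
    obtain ⟨d, hd0, hd⟩ := h2 t 0 ht
    simp only [pow_zero, mul_one] at hd
    have hswap : ∀ y, 0 < y → HasSum (fun p : ℕ × ℕ => γ p.2 p.1 * t ^ p.2 * y ^ p.1) (Φ y t) := fun y hy =>
      (Equiv.prodComm ℕ ℕ).hasSum_iff.2 (hpos y t hy ht)
    have hsj : ∀ j, Summable (fun n => γ n j * t ^ n) := fun j => by
      have := (hswap 1 one_pos).summable.prod_factor j
      simpa using this
    have hAE : AE (fun y => Φ y t) (fun j => ∑' n, γ n j * t ^ n) := by
      refine AE_of_hasSum one_pos fun y hy _ => ?_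
      exact (hswap y hy).prod_fiberwise (fun j => ((hsj j).hasSum.mul_right (y ^ j)))
    have h3 := (AE_of_hasSum one_pos (fun y hy _ => hd y hy.le)).uniq hAE
    have h4 := hd 0 le_rfl
    have h5 : Φ 0 t = d 0 := by
      refine h4.unique ?_
      have := hasSum_single (f := fun n => d n * (0:ℝ) ^ n) 0 (fun n hn => by simp [hn])
      simpa using this
    rw [h5, h3]
    have hinj : Function.Injective (fun n : ℕ => (n, (0:ℕ))) := fun a b h => (Prod.mk.inj h).1
    refine (hinj.hasSum_iff ?_).1 ?_
    · rintro ⟨n, j⟩ hp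
      have : j ≠ 0 := by
        rintro rfl
        exact hp ⟨n, rfl⟩
      simp [this]
    · refine hs_congr (hsj 0).hasSum (fun n => ?_) rfl
      simp
  · exact hpos y t hy ht

lemma c_PS (n : ℕ) : PS (fun y => c y n) := by
  obtain ⟨γ, hγ0, hγ⟩ := two_d hc0 hcs h2
  refine ⟨γ n, hγ0 n, fun y hy => ?_⟩
  have hsn : ∀ n, Summable (fun j => γ n j * y ^ j) := fun n => by
    have := (hγ y 1 hy zero_le_one).summable.prod_factor n
    simpa using this
  have h3 : ∀ t, 0 ≤ t → HasSum (fun n => (∑' j, γ n j * y ^ j) * t ^ n) (Φ y t) := fun t ht => by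
    refine (hγ y t hy ht).prod_fiberwise (fun n => ?_)
    exact hs_congr ((hsn n).hasSum.mul_right (t ^ n)) (fun j => by ring) rfl
  have := coeff_unique (hcs y hy) h3
  change HasSum _ (c y n)
  rw [this]
  exact (hsn n).hasSum
end

end MT

namespace MT
open Polynomial Filter Topology Asymptotics

/-- polynomials with nonnegative coefficients -/
inductive NP : (ℝ → ℝ) → Prop
  | const (c : ℝ) (hc : 0 ≤ c) : NP (fun _ => c)
  | id : NP (fun y => y)
  | add {f g : ℝ → ℝ} : NP f → NP g → NP (fun y => f y + g y)
  | mul {f g : ℝ → ℝ} : NP f → NP g → NP (fun y => f y * g y)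

lemma NP.cont {f : ℝ → ℝ} (h : NP f) : Continuous f := by
  induction h with
  | const c hc => fun_prop
  | id => fun_prop
  | add _ _ h1 h2 => fun_prop
  | mul _ _ h1 h2 => fun_prop

lemma NP.ms {f : ℝ → ℝ} (h : NP f) {s : ℕ → ℝ} (hs : MS s) : MS (fun k => f (s k)) := by
  induction h with
  | const c hc => exact MS.const c hc
  | id => exact hs
  | add _ _ h1 h2 => exact h1.add h2
  | mul _ _ h1 h2 => exact h1.mul h2

lemma NP.pow (N : ℕ) : NP (fun y => y ^ N) := by
  induction N with
  | zero => simpa using NP.const 1 zero_le_one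
  | succ N ih => simpa only [pow_succ] using ih.mul NP.id

/-- positivity along polynomial curves -/
def KP {m : ℕ} (F : (Fin m → ℝ) → ℝ) : Prop :=
  ∀ P : Fin m → ℝ → ℝ, (∀ l, NP (P l)) → PS (fun y => F (fun l => P l y))

lemma HC.curve {m : ℕ} {F : (Fin m → ℝ) → ℝ} (h : HC F) (P : Fin m → ℝ → ℝ) (hP : ∀ l, NP (P l)) :
    ∃ c : ℕ → ℝ, (∀ n, 0 ≤ c n) ∧ ∀ y, HasSum (fun n => c n * y ^ n) (F (fun l => P l y)) := by
  refine H1.main (f := fun y => F (fun l => P l y)) ⟨?_, fun s hs => ?_⟩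
  · exact h.continuous.comp (continuous_pi fun l => (hP l).cont)
  · exact h.PB (fun l k => P l (s k)) (fun l => (hP l).ms hs)

lemma hasSum_prod_nonneg {A B : Type*} {g : A × B → ℝ} (hg : ∀ p, 0 ≤ g p) {b : A → ℝ} {S : ℝ}
    (h1 : ∀ n, HasSum (fun x => g (n, x)) (b n)) (h2 : HasSum b S) : HasSum g S := by
  have hs : Summable g := by
    refine (summable_prod_of_nonneg hg).2 ⟨fun n => (h1 n).summable, h2.summable.congr fun n => ?_⟩
    exact (h1 n).tsum_eq.symm
  have := hs.hasSum.prod_fiberwise h1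
  rw [h2.unique this]
  exact hs.hasSum

theorem KP.main {m : ℕ} {F : (Fin m → ℝ) → ℝ} (h : KP F) :
    ∃ a : (Fin m → ℕ) → ℝ, (∀ α, 0 ≤ a α) ∧ ∀ x : Fin m → ℝ, (∀ l, 0 ≤ x l) →
      HasSum (fun α => a α * ∏ l, x l ^ α l) (F x) := by
  induction m with
  | zero =>
    refine ⟨fun _ => F default, fun _ => ?_, fun x _ => ?_⟩
    · have := (h (fun _ => fun y => y) (fun _ => NP.id)).nonneg (le_refl 0)
      rwa [Subsingleton.elim (default : Fin 0 → ℝ) (fun _ => 0)]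
    · rw [Subsingleton.elim x default]
      have := hasSum_unique (fun α : Fin 0 → ℕ => F default * ∏ l, (default : Fin 0 → ℝ) l ^ α l)
      simpa using this
  | succ m ih =>
    have hex : ∀ x : Fin m → ℝ, ∃ c : ℕ → ℝ, (∀ l, 0 ≤ x l) → (∀ n, 0 ≤ c n) ∧
        ∀ t, 0 ≤ t → HasSum (fun n => c n * t ^ n) (F (Fin.cons t x)) := by
      intro x
      by_cases hx : ∀ l, 0 ≤ x l
      · obtain ⟨c, hc, hs⟩ := h (Fin.cons (fun y => y) (fun l _ => x l)) (fun l => by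
          refine Fin.cases ?_ (fun l => ?_) l
          · exact NP.id
          · exact NP.const _ (hx l))
        refine ⟨c, fun _ => ⟨hc, fun t ht => hs_congr (hs t ht) (fun _ => rfl) ?_⟩⟩
        refine congrArg F ?_
        funext l
        refine Fin.cases ?_ (fun l => ?_) l <;> simp
      · exact ⟨0, fun h => absurd h hx⟩
    choose c hc using hex
    have hK : ∀ n, KP (fun x => c x n) := by
      intro n P hP
      have hP0 : ∀ y, 0 ≤ y → ∀ l, 0 ≤ P l y := by
        intro y hy l
        have hN : ∀ {f : ℝ → ℝ}, NP f → 0 ≤ f y := by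
          intro f hf
          induction hf with
          | const c hc => exact hc
          | id => exact hy
          | add _ _ h1 h2 => exact add_nonneg h1 h2
          | mul _ _ h1 h2 => exact mul_nonneg h1 h2
        exact hN (hP l)
      refine c_PS (Φ := fun y t => F (Fin.cons t (fun l => P l y))) (c := fun y n => c (fun l => P l y) n)
        (fun y hy => (hc _ (hP0 y hy)).1) (fun y hy => (hc _ (hP0 y hy)).2) (fun θ N hθ => ?_) n
      have := h (Fin.cons (fun y => θ * y ^ N) P) (fun l => by
          refine Fin.cases ?_ (fun l => ?_) l
          · exact (NP.const θ hθ).mul (NP.pow N)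
          · exact hP l)
      convert this using 3 with y
      funext l
      refine Fin.cases ?_ (fun l => ?_) l <;> simp
    choose a ha0 ha using fun n => ih (hK n)
    refine ⟨fun α => a (α 0) (Fin.tail α), fun α => ha0 _ _, fun x hx => ?_⟩
    rw [← (Fin.consEquiv (fun _ => ℕ)).hasSum_iff]
    have hx' : ∀ l, 0 ≤ Fin.tail x l := fun l => hx _
    have h2 := (hc _ hx').2 (x 0) (hx 0)
    rw [Fin.cons_self_tail] at h2
    refine hasSum_prod_nonneg ?_ (fun n => ?_) h2
    · rintro ⟨n, α⟩
      exact mul_nonneg (ha0 _ _) (Finset.prod_nonneg fun l _ => pow_nonneg (hx l) _)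
    · refine hs_congr ((ha n _ hx').mul_right (x 0 ^ n)) (fun α => ?_) rfl
      simp [Fin.consEquiv, Fin.prod_univ_succ, Fin.tail]
      ring

lemma fiber_sum {ι : Type*} (d : ι → ℕ) (g : ι → ℝ) (hg : Summable g) (y S : ℝ)
    (h : HasSum (fun α => g α * y ^ d α) S) :
    HasSum (fun n => (∑' α : {α // d α = n}, g α) * y ^ n) S := by
  have h1 := (Equiv.sigmaFiberEquiv d).hasSum_iff.2 h
  refine h1.sigma (fun n => ?_)
  have h2 : HasSum (fun α : {α // d α = n} => g α) (∑' α : {α // d α = n}, g α) :=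
    (hg.subtype {α | d α = n}).hasSum
  refine hs_congr (h2.mul_right (y ^ n)) (fun α => ?_) rfl
  simp [Equiv.sigmaFiberEquiv, α.2]

theorem HC.main {m : ℕ} {F : (Fin m → ℝ) → ℝ} (h : HC F) :
    ∃ a : (Fin m → ℕ) → ℝ, (∀ α, 0 ≤ a α) ∧ ∀ x : Fin m → ℝ,
      HasSum (fun α => a α * ∏ l, x l ^ α l) (F x) := by
  have hK : KP F := fun P hP => by
    obtain ⟨c, hc, hs⟩ := h.curve P hP
    exact ⟨c, hc, fun y _ => hs y⟩
  obtain ⟨a, ha, hs⟩ := hK.main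
  refine ⟨a, ha, fun x => ?_⟩
  let P : Fin m → ℝ → ℝ := fun l y => |x l| * (if x l < 0 then y else 1)
  have hP : ∀ l, NP (P l) := by
    intro l
    refine (NP.const |x l| (abs_nonneg _)).mul ?_
    by_cases hl : x l < 0
    · simpa [hl] using NP.id
    · simpa [hl] using NP.const 1 zero_le_one
  let d : (Fin m → ℕ) → ℕ := fun α => ∑ l, if x l < 0 then α l else 0
  let g : (Fin m → ℕ) → ℝ := fun α => a α * ∏ l, |x l| ^ α l
  have hg : Summable g := (hs (fun l => |x l|) (fun l => abs_nonneg _)).summable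
  have hg0 : ∀ α, 0 ≤ g α := fun α => mul_nonneg (ha α) (Finset.prod_nonneg fun l _ => by positivity)
  have hid : ∀ y α, a α * ∏ l, (P l y) ^ α l = g α * y ^ d α := by
    intro y α
    simp only [g, d, P, mul_pow, Finset.prod_mul_distrib, ← Finset.prod_pow_eq_pow_sum, mul_assoc]
    congr 2
    refine Finset.prod_congr rfl fun l _ => ?_
    split_ifs <;> simp
  obtain ⟨c, hc, hcs⟩ := h.curve P hP
  have hce : c = fun n => ∑' α : {α // d α = n}, g α := by
    refine coeff_unique (fun y _ => hcs y) (fun y hy => fiber_sum d g hg y _ ?_)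
    refine hs_congr (hs (fun l => P l y) fun l => ?_) (fun α => hid y α) rfl
    exact mul_nonneg (abs_nonneg _) (by split_ifs <;> simp [hy])
  have hx : (fun l => P l (-1)) = x := by
    funext l
    simp only [P]
    split_ifs with hl
    · rw [abs_of_neg hl]; ring
    · rw [abs_of_nonneg (not_lt.1 hl), mul_one]
  have hsum : Summable (fun α => g α * (-1) ^ d α) := by
    refine Summable.of_norm (hg.congr fun α => ?_)
    rw [norm_mul, norm_pow, norm_neg, norm_one, one_pow, mul_one, Real.norm_of_nonneg (hg0 α)]
  have h1 := fiber_sum d g hg (-1) _ hsum.hasSum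
  have h2 := hcs (-1)
  rw [hce, hx] at h2
  rw [h2.unique h1]
  refine hs_congr hsum.hasSum (fun α => ?_) rfl
  rw [← hid]
  simp only [congrFun hx]

end MT

namespace MT
open Polynomial Filter Topology Asymptotics

/-- admissible measures on `[-1,1]` -/
def BM (μ : Measure ℝ) : Prop := IsAdmissible μ ∧ μ (Set.Icc (-1 : ℝ) 1)ᶜ = 0

lemma BM.fin {μ : Measure ℝ} (h : IsAdmissible μ) : IsFiniteMeasure μ := by
  have := h 0
  simp only [pow_zero] at this
  exact (integrable_const_iff_isFiniteMeasure one_ne_zero).1 this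

lemma BM.ae {μ : Measure ℝ} (h : BM μ) : ∀ᵐ x ∂μ, |x| ≤ 1 := by
  have : ∀ᵐ x ∂μ, x ∈ Set.Icc (-1:ℝ) 1 := h.2
  filter_upwards [this] with x hx
  exact abs_le.2 hx

lemma BM.of {μ : Measure ℝ} [IsFiniteMeasure μ] (h : ∀ᵐ x ∂μ, |x| ≤ 1) : BM μ := by
  refine ⟨fun k => ?_, ?_⟩
  · refine Integrable.of_bound (by fun_prop) 1 ?_
    filter_upwards [h] with x hx
    rw [norm_pow, Real.norm_eq_abs]
    exact pow_le_one₀ (abs_nonneg _) hx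
  · have : ∀ᵐ x ∂μ, x ∈ Set.Icc (-1:ℝ) 1 := by
      filter_upwards [h] with x hx
      exact abs_le.1 hx
    exact this

lemma BM.bound {μ : Measure ℝ} (h : BM μ) (k : ℕ) : ∫ x, ‖x ^ k‖ ∂μ ≤ moment μ 0 := by
  refine integral_mono_ae (h.1 k).norm (h.1 0) ?_
  filter_upwards [h.ae] with x hx
  rw [norm_pow, Real.norm_eq_abs, pow_zero]
  exact pow_le_one₀ (abs_nonneg _) hx

lemma MS.meas {s : ℕ → ℝ} (h : MS s) : ∃ μ, BM μ ∧ ∀ k, moment μ k = s k := by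
  induction h with
  | pow u hu =>
    refine ⟨Measure.dirac u, BM.of ?_, fun k => by simp [moment]⟩
    rw [ae_dirac_eq]; exact hu
  | add _ _ h1 h2 =>
    obtain ⟨μ, hμ, h1⟩ := h1
    obtain ⟨ν, hν, h2⟩ := h2
    refine ⟨μ + ν, ⟨fun k => (hμ.1 k).add_measure (hν.1 k), by simp [hμ.2, hν.2]⟩, fun k => ?_⟩
    rw [moment, integral_add_measure (hμ.1 k) (hν.1 k)]
    exact congrArg₂ (· + ·) (h1 k) (h2 k)
  | smul c hc _ h1 =>
    obtain ⟨μ, hμ, h1⟩ := h1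
    refine ⟨ENNReal.ofReal c • μ, ⟨fun k => (hμ.1 k).smul_measure ENNReal.ofReal_ne_top, by simp [hμ.2]⟩, fun k => ?_⟩
    rw [moment, integral_smul_measure, ENNReal.toReal_ofReal hc]
    exact congrArg (c * ·) (h1 k)

lemma Lf_meas {σ : Measure ℝ} (h : IsAdmissible σ) (p : ℝ[X]) :
    Integrable (fun x => p.eval x) σ ∧ Lf (moment σ) p = ∫ x, p.eval x ∂σ := by
  induction p using Polynomial.induction_on' with
  | add p q hp hq =>
    simp only [eval_add]
    refine ⟨hp.1.add hq.1, ?_⟩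
    rw [map_add, integral_add hp.1 hq.1, hp.2, hq.2]
  | monomial k c =>
    simp only [eval_monomial]
    refine ⟨(h k).const_mul c, ?_⟩
    rw [Lf_mono, integral_const_mul, mul_comm]; rfl

variable {m : ℕ} {F : (Fin m → ℝ) → ℝ}

lemma HC_of_one (h : ∀ μ : Fin m → Measure ℝ, (∀ l, IsAdmissible (μ l)) →
          (∀ l, μ l (Set.Icc (-1 : ℝ) 1)ᶜ = 0) →
          ∃ σ : Measure ℝ, IsAdmissible σ ∧
            ∀ k : ℕ, F (fun l => moment (μ l) k) = moment σ k) : HC F := by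
  intro s hs q
  choose μ hμ hm using fun l => (hs l).meas
  obtain ⟨σ, hσ, he⟩ := h μ (fun l => (hμ l).1) (fun l => (hμ l).2)
  have : (fun k => F (fun l => s l k)) = moment σ := by
    funext k
    rw [← he]
    simp only [hm]
  rw [this, (Lf_meas hσ _).2]
  refine integral_nonneg fun x => ?_
  rw [Pi.zero_apply, eval_mul]
  exact mul_self_nonneg _

lemma Lf_sq (s : ℕ → ℝ) (q : ℝ[X]) : Lf s (q * q) = 
    (fun i : Fin (q.natDegree + 1) => q.coeff i) ⬝ᵥ
      (Matrix.mulVec (Matrix.of fun i j : Fin (q.natDegree + 1) => s (i + j)) (fun i => q.coeff i)) := by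
  have hq : q = ∑ i : Fin (q.natDegree + 1), monomial (i : ℕ) (q.coeff i) := by
    conv_lhs => rw [q.as_sum_range, Finset.sum_range]
  have h1 : q * q = ∑ i : Fin (q.natDegree + 1), ∑ j : Fin (q.natDegree + 1),
      monomial ((i : ℕ) + j) (q.coeff i * q.coeff j) := by
    conv_lhs => rw [hq]
    rw [Finset.sum_mul_sum]
    simp only [monomial_mul_monomial]
  rw [h1]
  simp only [map_sum, Lf_mono, dotProduct, Matrix.mulVec, Finset.mul_sum, Matrix.of_apply]
  refine Finset.sum_congr rfl fun i _ => Finset.sum_congr rfl fun j _ => by ring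

lemma MS.hankel {s : ℕ → ℝ} (h : MS s) (N : ℕ) : (Matrix.of fun i j : Fin N => s (i + j)).PosSemidef := by
  induction h with
  | pow u hu =>
    convert Matrix.posSemidef_vecMulVec_self_star (fun i : Fin N => u ^ (i : ℕ)) using 1
    ext i j
    simp [Matrix.vecMulVec, pow_add]
  | add _ _ h1 h2 => exact h1.add h2
  | smul c hc _ h1 => exact h1.smul hc

lemma HC_of_two (h : ∀ (N : ℕ) (A : Fin m → Matrix (Fin N) (Fin N) ℝ), (∀ l, (A l).PosSemidef) →
          (Matrix.of fun i j : Fin N => F (fun l => A l i j)).PosSemidef) : HC F := by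
  intro s hs q
  rw [Lf_sq]
  have := (h _ _ (fun l => (hs l).hankel (q.natDegree + 1))).dotProduct_mulVec_nonneg (fun i => q.coeff i)
  exact this

lemma psd_pow {N : ℕ} {A : Matrix (Fin N) (Fin N) ℝ} (hA : A.PosSemidef) (n : ℕ) :
    (Matrix.of fun i j => A i j ^ n).PosSemidef := by
  induction n with
  | zero =>
    convert Matrix.posSemidef_vecMulVec_self_star (fun _ : Fin N => (1:ℝ)) using 1
    ext i j
    simp [Matrix.vecMulVec]
  | succ n ih =>
    have e : (Matrix.of fun i j => A i j ^ (n + 1)) = (Matrix.of fun i j => A i j ^ n).hadamard A := by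
      ext i j
      simp [Matrix.hadamard, pow_succ]
    rw [e]
    exact ih.hadamard hA

lemma psd_prod {N : ℕ} (A : Fin m → Matrix (Fin N) (Fin N) ℝ) (hA : ∀ l, (A l).PosSemidef) (S : Finset (Fin m)) :
    (Matrix.of fun i j => ∏ l ∈ S, A l i j).PosSemidef := by
  classical
  induction S using Finset.induction_on with
  | empty => 
    convert Matrix.posSemidef_vecMulVec_self_star (fun _ : Fin N => (1:ℝ)) using 1
    ext i j
    simp [Matrix.vecMulVec]
  | insert l S hl ih =>
    have e : (Matrix.of fun i j => ∏ l ∈ insert l S, A l i j) =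
        (A l).hadamard (Matrix.of fun i j => ∏ l ∈ S, A l i j) := by
      ext i j
      simp [Finset.prod_insert hl, Matrix.hadamard]
    rw [e]
    exact (hA l).hadamard ih

lemma two_of_three (c : (Fin m → ℕ) → ℝ) (hc : ∀ α, 0 ≤ c α)
    (h : ∀ x : Fin m → ℝ, HasSum (fun α : Fin m → ℕ => c α * ∏ l, x l ^ α l) (F x))
    (N : ℕ) (A : Fin m → Matrix (Fin N) (Fin N) ℝ) (hA : ∀ l, (A l).PosSemidef) :
    (Matrix.of fun i j : Fin N => F (fun l => A l i j)).PosSemidef := by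
  refine Matrix.PosSemidef.of_dotProduct_mulVec_nonneg ?_ fun x => ?_
  · ext i j
    simp only [Matrix.conjTranspose_apply, Matrix.of_apply, star_trivial]
    congr 1
    funext l
    exact (hA l).1.apply i j
  · have hα : ∀ α : Fin m → ℕ, 0 ≤ ∑ i, ∑ j, x i * ((c α * ∏ l, A l i j ^ α l) * x j) := by
      intro α
      have := (psd_prod _ (fun l => psd_pow (hA l) (α l)) Finset.univ).dotProduct_mulVec_nonneg x
      have h2 := mul_nonneg (hc α) this
      refine h2.trans_eq ?_
      simp only [dotProduct, Matrix.mulVec, Finset.mul_sum, Matrix.of_apply, star_trivial, Pi.star_apply]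
      refine Finset.sum_congr rfl fun i _ => Finset.sum_congr rfl fun j _ => by ring
    have hs : HasSum (fun α => ∑ i, ∑ j, x i * ((c α * ∏ l, A l i j ^ α l) * x j))
        (∑ i, ∑ j, x i * (F (fun l => A l i j) * x j)) :=
      hasSum_sum fun i _ => hasSum_sum fun j _ => ((h _).mul_right _).mul_left _
    refine (hs.nonneg hα).trans_eq ?_
    simp only [dotProduct, Matrix.mulVec, Finset.mul_sum, Matrix.of_apply, star_trivial, Pi.star_apply]

lemma BM.mul {μ ν : Measure ℝ} (hμ : BM μ) (hν : BM ν) :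
    ∃ ρ, BM ρ ∧ ∀ k, moment ρ k = moment μ k * moment ν k := by
  haveI := BM.fin hμ.1
  haveI := BM.fin hν.1
  have hm : Measurable (fun z : ℝ × ℝ => z.1 * z.2) := by fun_prop
  refine ⟨(μ.prod ν).map (fun z => z.1 * z.2), ?_, fun k => ?_⟩
  · refine BM.of ?_
    rw [ae_map_iff hm.aemeasurable (measurableSet_le (by fun_prop) (by fun_prop))]
    have h1 : ∀ᵐ z ∂(μ.prod ν), |z.1| ≤ 1 := Measure.quasiMeasurePreserving_fst.ae hμ.ae
    have h2 : ∀ᵐ z ∂(μ.prod ν), |z.2| ≤ 1 := Measure.quasiMeasurePreserving_snd.ae hν.ae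
    filter_upwards [h1, h2] with z h1 h2
    rw [abs_mul]
    exact mul_le_one₀ h1 (abs_nonneg _) h2
  · rw [moment, integral_map hm.aemeasurable (by fun_prop)]
    simp only [mul_pow]
    exact integral_prod_mul (fun x => x ^ k) (fun x => x ^ k)

lemma BM.pow {μ : Measure ℝ} (hμ : BM μ) (n : ℕ) : ∃ ρ, BM ρ ∧ ∀ k, moment ρ k = moment μ k ^ n := by
  induction n with
  | zero => simpa using (MS.const 1 zero_le_one).meas
  | succ n ih =>
    obtain ⟨ρ, h1, h2⟩ := ih
    obtain ⟨τ, h3, h4⟩ := h1.mul hμ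
    exact ⟨τ, h3, fun k => by rw [h4, h2, pow_succ]⟩

lemma BM.prod (μ : Fin m → Measure ℝ) (hμ : ∀ l, BM (μ l)) (α : Fin m → ℕ) (S : Finset (Fin m)) :
    ∃ ρ, BM ρ ∧ ∀ k, moment ρ k = ∏ l ∈ S, moment (μ l) k ^ α l := by
  classical
  induction S using Finset.induction_on with
  | empty => simpa using (MS.const 1 zero_le_one).meas
  | insert l S hl ih =>
    obtain ⟨ρ, h1, h2⟩ := ih
    obtain ⟨π, h5, h6⟩ := (hμ l).pow (α l)
    obtain ⟨τ, h3, h4⟩ := h5.mul h1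
    exact ⟨τ, h3, fun k => by rw [h4, h2, h6, Finset.prod_insert hl]⟩

lemma one_of_three (c : (Fin m → ℕ) → ℝ) (hc : ∀ α, 0 ≤ c α)
    (h : ∀ x : Fin m → ℝ, HasSum (fun α : Fin m → ℕ => c α * ∏ l, x l ^ α l) (F x))
    (μ : Fin m → Measure ℝ) (hμ : ∀ l, IsAdmissible (μ l))
    (hμ' : ∀ l, μ l (Set.Icc (-1 : ℝ) 1)ᶜ = 0) :
    ∃ σ : Measure ℝ, IsAdmissible σ ∧ ∀ k : ℕ, F (fun l => moment (μ l) k) = moment σ k := by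
  choose ρ h1 h2 using fun α => BM.prod μ (fun l => ⟨hμ l, hμ' l⟩) α Finset.univ
  let σ : (Fin m → ℕ) → Measure ℝ := fun α => ENNReal.ofReal (c α) • ρ α
  have hint : ∀ k, Integrable (fun x : ℝ => x ^ k) (Measure.sum σ) := by
    intro k
    refine integrable_sum_measure (fun α => ((h1 α).1 k).smul_measure ENNReal.ofReal_ne_top) ?_
    refine Summable.of_nonneg_of_le (fun α => integral_nonneg fun x => norm_nonneg _) (fun α => ?_)
      (h (fun l => moment (μ l) 0)).summable
    rw [← h2]
    simp only [σ]
    rw [integral_smul_measure, ENNReal.toReal_ofReal (hc α), smul_eq_mul]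
    exact mul_le_mul_of_nonneg_left ((h1 α).bound k) (hc α)
  refine ⟨Measure.sum σ, hint, fun k => ?_⟩
  refine (h _).unique (hs_congr (hasSum_integral_measure (hint k)) (fun α => ?_) rfl)
  rw [← h2]
  simp only [σ]
  rw [integral_smul_measure, ENNReal.toReal_ofReal (hc α), smul_eq_mul]
  rfl

end MT

/-- Multivariable moment transformers: a function of `m` variables maps `m`-tuples of
moment sequences of admissible measures on `[-1,1]` to moment sequences iff it preserves
positive semidefiniteness on tuples of positive semidefinite matrices of all sizes, iff
it is given by a power series in `m` variables with non-negative coefficients converging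
everywhere on `ℝ^m`. -/
theorem multivariable_moment_transform_TFAE (m : ℕ) (hm : 1 ≤ m)
    (F : (Fin m → ℝ) → ℝ) :
    List.TFAE
      [∀ μ : Fin m → Measure ℝ, (∀ l, IsAdmissible (μ l)) →
          (∀ l, μ l (Set.Icc (-1 : ℝ) 1)ᶜ = 0) →
          ∃ σ : Measure ℝ, IsAdmissible σ ∧
            ∀ k : ℕ, F (fun l => moment (μ l) k) = moment σ k,
        ∀ (N : ℕ) (A : Fin m → Matrix (Fin N) (Fin N) ℝ), (∀ l, (A l).PosSemidef) →
          (Matrix.of fun i j : Fin N => F (fun l => A l i j)).PosSemidef,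
        ∃ c : (Fin m → ℕ) → ℝ, (∀ α, 0 ≤ c α) ∧
          ∀ x : Fin m → ℝ,
            HasSum (fun α : Fin m → ℕ => c α * ∏ l, x l ^ α l) (F x)] := by
  tfae_have 1 → 3 := fun h => (MT.HC_of_one h).main
  tfae_have 2 → 3 := fun h => (MT.HC_of_two h).main
  tfae_have 3 → 1 := fun ⟨c, hc, h⟩ => MT.one_of_three c hc h
  tfae_have 3 → 2 := fun ⟨c, hc, h⟩ => MT.two_of_three c hc h
  tfae_finish
end
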